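/- Let 𝒢 be a nonempty Gδ subset of 2^ω with λ(𝒢) = 0, and let G be a Borel subset of ω^ω × 2^ω contained in ω^ω × 𝒢 such that every vertical section G_α = {β : (α,β) ∈ G} is a Gδ subset of 2^ω. Then there is a Borel map F : ω^ω → 𝓜 such that G_α = D(F(α)) for every α ∈ ω^ω. -/

import Mathlib

open MeasureTheory Filter Topology
open scoped ENNReal

/-- The basic cylinder `N_s` determined by a finite binary sequence `s`:
the set of all `β ∈ 2^ω` extending `s`. -/
def cyl (s : List Bool) : Set (ℕ → Bool) :=
  {β | ∀ i : Fin s.length, β i = s.get i}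

/-- The initial segment `β↾l` of `β ∈ 2^ω`, as a finite binary sequence. -/
def seg (β : ℕ → Bool) (l : ℕ) : List Bool := List.ofFn (fun i : Fin l => β i)

/-- A martingale: a `[0,1]`-valued function on finite binary sequences with
`f(s) = (f(s⌢0) + f(s⌢1))/2`. -/
def IsMartingale (f : List Bool → ℝ) : Prop :=
  (∀ s, f s ∈ Set.Icc (0:ℝ) 1) ∧
  ∀ s, f s = (f (s ++ [false]) + f (s ++ [true])) / 2

/-- The oscillation `osc(f,β) = inf_N sup_{p,q ≥ N} |f(β↾p) − f(β↾q)|`. -/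
noncomputable def osc (f : List Bool → ℝ) (β : ℕ → Bool) : ℝ :=
  ⨅ N : ℕ, ⨆ p : {n : ℕ // N ≤ n}, ⨆ q : {n : ℕ // N ≤ n},
    |f (seg β p.1) - f (seg β q.1)|

/-- The set of divergence `D(f) = {β : osc(f,β) > 0}`. -/
def divSet (f : List Bool → ℝ) : Set (ℕ → Bool) := {β | 0 < osc f β}

/-- `M` has density 1 at `β`: `λ(M ∩ N_{β↾l}) / λ(N_{β↾l}) → 1`. -/
def densityOne (μ : Measure (ℕ → Bool)) (M : Set (ℕ → Bool)) (β : ℕ → Bool) : Prop :=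
  Tendsto (fun l : ℕ => μ (M ∩ cyl (seg β l)) / μ (cyl (seg β l))) atTop (𝓝 1)

/-- A set is `Σ⁰₃` iff it is a countable union of `Gδ` sets. -/
def IsSigma03 {X : Type*} [TopologicalSpace X] (S : Set X) : Prop :=
  ∃ g : ℕ → Set X, (∀ n, IsGδ (g n)) ∧ S = ⋃ n, g n

/-- A set is coanalytic (`Π¹₁`) iff its complement is analytic. -/
def IsCoanalytic {X : Type*} [TopologicalSpace X] (S : Set X) : Prop :=
  MeasureTheory.AnalyticSet Sᶜ

/-- The associated (partial) function of a martingale: `ψ(f)(β) = lim_l f(β↾l)`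
(a junk value if the limit does not exist). -/
noncomputable def psi (f : List Bool → ℝ) (β : ℕ → Bool) : ℝ :=
  limUnder atTop (fun l => f (seg β l))

/-- The compact space `𝓜` of martingales, as a subspace of `[0,1]^{2^{<ω}}`. -/
abbrev Mart := {f : List Bool → ℝ // IsMartingale f}

/-!
A Borel set `G ⊆ X × 2^ω` with `Gδ` sections is a countable intersection of countable unions of
rectangles `P × V` with `P` Borel and `V` open. Indeed, by Novikov's separation theorem such unions
are exactly the Borel sets with open sections, and if `G` could not be separated in this way from
its complement, a fusion argument would find a section `G_x` and a closed set of codes of points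
of its complement in which the codes of points of `G_x` form a dense `Gδ`, contrary to Baire's
theorem. Hence there are sets `A x` of finite sequences, depending measurably on `x`, such that
`G_x` consists of the `β` with infinitely many initial segments in `A x`.

A null set `𝒢` admits, for every `r`, an arbitrarily cheap nonnegative martingale `m r` that
converges everywhere and is eventually at least `1` along the points of `𝒢` through `r`: bet on the
density of a small open cover of `𝒢`, and on all its upcrossings, which forces convergence
everywhere, and stop at `1`. Buying `m r` at every `r ∈ A x` gives a nonnegative martingale that
tends to infinity on `G_x` and converges elsewhere. Reversing the direction of its increments,
suitably scaled, each time it has doubled yields a `[0, 1]`-valued martingale that oscillates on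
`G_x` and converges elsewhere.
-/

section Novikov

theorem exists_cylinder_subset {E : ℕ → Type*} [∀ n, TopologicalSpace (E n)]
    [∀ n, DiscreteTopology (E n)] {x : ∀ n, E n} {U : Set (∀ n, E n)} (hU : U ∈ 𝓝 x) :
    ∃ n, PiNat.cylinder x n ⊆ U := by
  obtain ⟨_, ⟨y, n, rfl⟩, hx, hsub⟩ :=
    (PiNat.isTopologicalBasis_cylinders E).mem_nhds_iff.1 hU
  exact ⟨n, (PiNat.mem_cylinder_iff_eq.1 hx).trans_subset hsub⟩

theorem exists_branch {α : Type*} [Nonempty α] {S : ℕ → (ℕ → α) → Prop}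
    (hS : ∀ n, DependsOn (S n) (Set.Iio n)) (h0 : ∀ u, S 0 u)
    (hstep : ∀ n u, S n u → ∃ a, S (n + 1) (Function.update u n a)) :
    ∃ u, ∀ n, S n u := by
  choose! next hnext using hstep
  let v : ℕ → ℕ → α := fun n =>
    n.rec (fun _ => Classical.arbitrary α) fun n u => Function.update u n (next n u)
  have hv : ∀ n, S n (v n) := fun n => n.rec (h0 _) fun n ih => hnext n _ ih
  have hagree : ∀ n k, n ≤ k → ∀ i < n, v k i = v n i := by
    intro n k hnk i hi
    induction k, hnk using Nat.le_induction with
    | base => rfl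
    | succ k hk ih => exact (Function.update_of_ne (by omega) _ _).trans ih
  refine ⟨fun i => v (i + 1) i, fun n => ?_⟩
  rw [hS n fun i (hi : i < n) => (hagree (i + 1) n hi i i.lt_succ_self).symm]
  exact hv n

variable {X : Type*} [MeasurableSpace X]

/-- The sets `Q n` are separated in the sense of Novikov: they can be enlarged to measurable sets
that still have no common point. -/
def NovikovSeparated (Q : ℕ → Set X) : Prop :=
  ∃ E : ℕ → Set X, (∀ n, MeasurableSet (E n)) ∧ (∀ n, Q n ⊆ E n) ∧ ⋂ n, E n = ∅

theorem NovikovSeparated.update_iUnion {Q : ℕ → Set X} {i : ℕ} {R : ℕ → Set X}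
    (h : ∀ k, NovikovSeparated (Function.update Q i (R k))) :
    NovikovSeparated (Function.update Q i (⋃ k, R k)) := by
  choose E hE hsub hempty using h
  refine ⟨Function.update (fun j => ⋂ k, E k j) i (⋃ k, E k i), fun j => ?_, fun j => ?_, ?_⟩
  · obtain rfl | hj := eq_or_ne j i
    · simpa using MeasurableSet.iUnion fun k => hE k j
    · simpa [hj] using MeasurableSet.iInter fun k => hE k j
  · obtain rfl | hj := eq_or_ne j i
    · simpa using fun k => (by simpa using hsub k j : R k ⊆ E k j).trans
        (Set.subset_iUnion (E · j) k)
    · simpa [hj] using fun k => (by simpa [hj] using hsub k j : Q j ⊆ E k j)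
  · refine Set.eq_empty_of_forall_notMem fun x hx => ?_
    rw [Set.mem_iInter] at hx
    obtain ⟨k, hk⟩ := Set.mem_iUnion.1 (by simpa only [Function.update_self] using hx i)
    refine Set.notMem_empty x (hempty k ▸ Set.mem_iInter.2 fun j => ?_)
    obtain rfl | hj := eq_or_ne j i
    · exact hk
    · exact Set.mem_iInter.1 (by simpa only [Function.update_of_ne hj] using hx j) k

theorem NovikovSeparated.of_disjoint {Q : ℕ → Set X} {i j : ℕ} (hij : i ≠ j) {U V : Set X}
    (hU : MeasurableSet U) (hV : MeasurableSet V) (hUV : Disjoint U V) (hi : Q i ⊆ U)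
    (hj : Q j ⊆ V) : NovikovSeparated Q := by
  refine ⟨Function.update (Function.update (fun _ => Set.univ) j V) i U, fun n => ?_, fun n => ?_,
    Set.eq_empty_of_forall_notMem fun x hx => hUV.notMem_of_mem_left (a := x) ?_ ?_⟩
  · obtain rfl | hni := eq_or_ne n i
    · simpa using hU
    obtain rfl | hnj := eq_or_ne n j
    · simpa [hni] using hV
    · simp [hni, hnj]
  · obtain rfl | hni := eq_or_ne n i
    · simpa using hi
    obtain rfl | hnj := eq_or_ne n j
    · simpa [hni] using hj
    · simp [hni, hnj]
  · simpa using Set.mem_iInter.1 hx i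
  · simpa [hij.symm] using Set.mem_iInter.1 hx j

/-- The set of `z` whose values agree with row `i` of the infinite matrix coded by `u`, as far as
that row is visible in the first `n` entries of `u`. -/
def rowBox (n : ℕ) (u : ℕ → ℕ) (i : ℕ) : Set (ℕ → ℕ) :=
  {z | ∀ m, Nat.pair i m < n → z m = u (Nat.pair i m)}

theorem dependsOn_rowBox (n : ℕ) : DependsOn (rowBox n) (Set.Iio n) := fun u v huv =>
  funext fun _ => Set.ext fun _ => forall₂_congr fun _ hm => by rw [huv _ hm]

theorem rowBox_succ_update (n : ℕ) (u : ℕ → ℕ) (k : ℕ) :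
    rowBox (n + 1) (Function.update u n k) =
      Function.update (rowBox n u) n.unpair.1
        (rowBox n u n.unpair.1 ∩ {z | z n.unpair.2 = k}) := by
  ext i z
  have hz : z ∈ rowBox (n + 1) (Function.update u n k) i ↔
      z ∈ rowBox n u i ∧ ∀ m, Nat.pair i m = n → z m = k := by
    simp only [rowBox, Set.mem_ofPred_eq, ← forall_and]
    refine forall_congr' fun m => ?_
    obtain h | h := eq_or_ne (Nat.pair i m) n
    · simp [h]
    · simp [h, le_iff_lt_or_eq]
  rw [hz]
  obtain rfl | hi := eq_or_ne i n.unpair.1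
  · rw [Function.update_self]
    refine and_congr_right' ⟨fun h => h _ (Nat.pair_unpair n), fun h m hm => ?_⟩
    rwa [show m = n.unpair.2 by rw [← hm, Nat.unpair_pair]]
  · rw [Function.update_of_ne hi]
    exact and_iff_left fun m hm => (hi (by rw [← hm, Nat.unpair_pair])).elim

theorem eventually_rowBox_subset {u : ℕ → ℕ} {i : ℕ} {U : Set (ℕ → ℕ)}
    (hU : U ∈ 𝓝 fun m => u (Nat.pair i m)) : ∀ᶠ n in atTop, rowBox n u i ⊆ U := by
  obtain ⟨M, hM⟩ := exists_cylinder_subset hU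
  filter_upwards [eventually_ge_atTop (Nat.pair i M)] with n hn z hz
  exact hM fun m hm => hz m ((Nat.pair_lt_pair_right i hm).trans_le hn)

variable [TopologicalSpace X] [T2Space X] [OpensMeasurableSpace X]

theorem NovikovSeparated.of_iInter_range_eq_empty {h : ℕ → (ℕ → ℕ) → X}
    (hcont : ∀ i, Continuous (h i)) (hempty : ⋂ i, Set.range (h i) = ∅) :
    NovikovSeparated fun i => Set.range (h i) := by
  by_contra hsep
  obtain ⟨u, hu⟩ : ∃ u, ∀ n, ¬ NovikovSeparated fun i => h i '' rowBox n u i := by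
    refine exists_branch (fun n u v huv => by rw [dependsOn_rowBox n huv])
      (fun u => by simpa [rowBox] using hsep) fun n u hn => ?_
    by_contra! hall
    have himage : ∀ k, (fun i => h i '' rowBox (n + 1) (Function.update u n k) i) =
        Function.update (fun i => h i '' rowBox n u i) n.unpair.1
          (h n.unpair.1 '' (rowBox n u n.unpair.1 ∩ {z | z n.unpair.2 = k})) := fun k => by
      rw [rowBox_succ_update]
      exact funext fun i => Function.apply_update (fun i B => h i '' B) _ _ _ i
    simp only [himage] at hall
    have hunion := NovikovSeparated.update_iUnion hall
    rw [← Set.image_iUnion, ← Set.inter_iUnion,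
      Set.iUnion_eq_univ_iff.2 fun z => ⟨z n.unpair.2, rfl⟩, Set.inter_univ] at hunion
    exact hn (by simpa only [Function.update_eq_self] using hunion)
  let z (i : ℕ) : ℕ → ℕ := fun m => u (Nat.pair i m)
  obtain ⟨i, hi⟩ : ∃ i, h 0 (z 0) ≠ h i (z i) := by
    by_contra! heq
    exact Set.notMem_empty (h 0 (z 0)) (hempty ▸ Set.mem_iInter.2 fun i => ⟨z i, (heq i).symm⟩)
  obtain ⟨U, V, hU, hV, h0U, hiV, hUV⟩ := t2_separation hi
  obtain ⟨n, hnU, hnV⟩ :=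
    ((eventually_rowBox_subset ((hcont 0).continuousAt.preimage_mem_nhds (hU.mem_nhds h0U))).and
      (eventually_rowBox_subset
        ((hcont i).continuousAt.preimage_mem_nhds (hV.mem_nhds hiV)))).exists
  exact hu n (.of_disjoint (fun h => hi (by rw [h])) hU.measurableSet hV.measurableSet hUV
    (Set.image_subset_iff.2 hnU) (Set.image_subset_iff.2 hnV))

theorem NovikovSeparated.of_analyticSet {Q : ℕ → Set X} (hQ : ∀ n, AnalyticSet (Q n))
    (hempty : ⋂ n, Q n = ∅) : NovikovSeparated Q := by
  by_cases hne : ∃ n, Q n = ∅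
  · obtain ⟨n, hn⟩ := hne
    exact .of_disjoint n.succ_ne_self.symm .empty .univ (Set.empty_disjoint _) hn.subset
      (Set.subset_univ _)
  · simp only [AnalyticSet] at hQ
    choose h hcont hrange using fun n => (hQ n).resolve_left fun h => hne ⟨n, h⟩
    obtain rfl : (fun n => Set.range (h n)) = Q := funext hrange
    exact of_iInter_range_eq_empty hcont hempty

end Novikov

section SectionTopology

theorem analyticSet_inter {Z : Type*} [TopologicalSpace Z] [T2Space Z] {s t : Set Z}
    (hs : AnalyticSet s) (ht : AnalyticSet t) : AnalyticSet (s ∩ t) := by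
  rw [Set.inter_eq_iInter]
  exact .iInter (Bool.forall_bool.2 ⟨ht, hs⟩)

theorem analyticSet_union {Z : Type*} [TopologicalSpace Z] {s t : Set Z}
    (hs : AnalyticSet s) (ht : AnalyticSet t) : AnalyticSet (s ∪ t) := by
  rw [Set.union_eq_iUnion]
  exact .iUnion (Bool.forall_bool.2 ⟨ht, hs⟩)

theorem exists_seq_isTopologicalBasis (Y : Type*) [TopologicalSpace Y]
    [SecondCountableTopology Y] :
    ∃ V : ℕ → Set Y, TopologicalSpace.IsTopologicalBasis (Set.range V) := by
  obtain ⟨V, hV⟩ := ((TopologicalSpace.countable_countableBasis Y).insert ∅).exists_eq_range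
    (Set.insert_nonempty _ _)
  exact ⟨V, hV ▸ (TopologicalSpace.isBasis_countableBasis Y).insert_empty⟩

variable {X Y : Type*} [MeasurableSpace X] [TopologicalSpace Y]

/-- A countable union of rectangles `P × V` with `P` measurable and `V` open. When `Y` is second
countable these are the sets whose vertical sections are open, uniformly measurably in the first
coordinate. -/
def IsMeasurableOpen (U : Set (X × Y)) : Prop :=
  ∃ (P : ℕ → Set X) (V : ℕ → Set Y), (∀ n, MeasurableSet (P n)) ∧ (∀ n, IsOpen (V n)) ∧
    U = ⋃ n, P n ×ˢ V n

theorem isMeasurableOpen_univ : IsMeasurableOpen (Set.univ : Set (X × Y)) :=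
  ⟨fun _ => Set.univ, fun _ => Set.univ, fun _ => .univ, fun _ => isOpen_univ,
    by simp [Set.iUnion_const]⟩

theorem isMeasurableOpen_empty : IsMeasurableOpen (∅ : Set (X × Y)) :=
  ⟨fun _ => ∅, fun _ => ∅, fun _ => .empty, fun _ => isOpen_empty, by simp⟩

theorem IsMeasurableOpen.isOpen_section {U : Set (X × Y)} (hU : IsMeasurableOpen U) (x : X) :
    IsOpen {y | (x, y) ∈ U} := by
  obtain ⟨P, V, -, hV, rfl⟩ := hU
  simp only [Set.mem_iUnion, Set.mem_prod, Set.ofPred_exists]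
  exact isOpen_iUnion fun n => isOpen_const.and (hV n)

theorem IsMeasurableOpen.measurableSet [MeasurableSpace Y] [OpensMeasurableSpace Y]
    {U : Set (X × Y)} (hU : IsMeasurableOpen U) : MeasurableSet U := by
  obtain ⟨P, V, hP, hV, rfl⟩ := hU
  exact .iUnion fun n => (hP n).prod (hV n).measurableSet

theorem IsMeasurableOpen.measurableSet_forall_mem {U : Set (X × Y)} (hU : IsMeasurableOpen U)
    {K : Set Y} (hK : IsCompact K) : MeasurableSet {x | ∀ y ∈ K, (x, y) ∈ U} := by
  obtain ⟨P, V, hP, hV, rfl⟩ := hU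
  have hfin : {x | ∀ y ∈ K, (x, y) ∈ ⋃ n, P n ×ˢ V n} =
      ⋃ (t : Finset ℕ) (_ : K ⊆ ⋃ n ∈ t, V n), ⋂ n ∈ t, P n := by
    ext x
    simp only [Set.mem_ofPred_eq, Set.mem_iUnion, Set.mem_prod, Set.mem_iInter, exists_prop]
    constructor
    · intro hx
      obtain ⟨b, hb, hbfin, hKb⟩ := hK.elim_finite_subcover_image (b := {n | x ∈ P n})
        (fun n _ => hV n) fun y hy => by simpa using hx y hy
      exact ⟨hbfin.toFinset, by simpa using hKb, fun n hn => hb (hbfin.mem_toFinset.1 hn)⟩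
    · rintro ⟨t, hKt, hxt⟩ y hy
      obtain ⟨n, hn, hyn⟩ := Set.mem_iUnion₂.1 (hKt hy)
      exact ⟨n, hxt n hn, hyn⟩
  rw [hfin]
  exact .iUnion fun t => .iUnion fun _ => t.measurableSet_biInter fun n _ => hP n

/-- The filter of sets that contain a countable intersection of `IsMeasurableOpen` sets
containing `B`. -/
def sectionNhds (B : Set (X × Y)) : Filter (X × Y) :=
  countableGenerate {U | IsMeasurableOpen U ∧ B ⊆ U}

instance (B : Set (X × Y)) : CountableInterFilter (sectionNhds B) :=
  inferInstanceAs (CountableInterFilter (countableGenerate _))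

theorem mem_sectionNhds {B U : Set (X × Y)} (hU : IsMeasurableOpen U) (hBU : B ⊆ U) :
    U ∈ sectionNhds B :=
  CountableGenerateSets.basic ⟨hU, hBU⟩

theorem exists_iInter_subset_of_mem_sectionNhds {B R : Set (X × Y)}
    (hR : R ∈ sectionNhds B) : ∃ U : ℕ → Set (X × Y),
      (∀ n, IsMeasurableOpen (U n)) ∧ B ⊆ ⋂ n, U n ∧ ⋂ n, U n ⊆ R := by
  obtain ⟨S, hS, hScount, hSR⟩ := mem_countableGenerate_iff.1 hR
  obtain ⟨U, hU⟩ := (hScount.insert Set.univ).exists_eq_range (Set.insert_nonempty _ _)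
  have hUS : ∀ n, U n = Set.univ ∨ U n ∈ S := fun n => hU.symm.subset ⟨n, rfl⟩
  refine ⟨U, fun n => ?_, Set.subset_iInter fun n => ?_, ?_⟩
  · exact (hUS n).elim (fun h => h ▸ isMeasurableOpen_univ) fun h => (hS h).1
  · exact (hUS n).elim (fun h => h ▸ Set.subset_univ B) fun h => (hS h).2
  · rwa [← Set.sInter_range, ← hU, Set.sInter_insert, Set.univ_inter]

variable [TopologicalSpace X] [PolishSpace X] [BorelSpace X] [PolishSpace Y]

/- A rectangle `P n × V n` of the required union comes from separating `Q n`, the points of `X`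
over which `R` meets `V n`, from the projection of `B \ E n`, where Novikov's theorem provides the
sets `E n`: every point of `B` lies in some `X × V n` and avoids `Q n × Y`. -/
theorem compl_mem_sectionNhds {R B : Set (X × Y)} (hR : AnalyticSet R) (hB : AnalyticSet B)
    (hRB : ∀ p ∈ B, p.2 ∉ closure {y | (p.1, y) ∈ R}) : Rᶜ ∈ sectionNhds B := by
  borelize Y
  obtain ⟨V, hV⟩ := exists_seq_isTopologicalBasis Y
  have hVopen : ∀ n, IsOpen (V n) := fun n => hV.isOpen ⟨n, rfl⟩
  let Q (n : ℕ) : Set X := Prod.fst '' (R ∩ Prod.snd ⁻¹' V n)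
  have hQ : ∀ n, AnalyticSet (Q n) := fun n => (analyticSet_inter hR
    ((hVopen n).preimage continuous_snd).measurableSet.analyticSet).image_of_continuous
      continuous_fst
  let C (n : ℕ) : Set (X × Y) := B ∩ (Prod.fst ⁻¹' Q n ∪ (Prod.snd ⁻¹' V n)ᶜ)
  have hC : ∀ n, AnalyticSet (C n) := fun n => analyticSet_inter hB (analyticSet_union
    ((hQ n).preimage continuous_fst)
    ((hVopen n).preimage continuous_snd).measurableSet.compl.analyticSet)
  have hCempty : ⋂ n, C n = ∅ := by
    refine Set.eq_empty_of_forall_notMem fun p hp => ?_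
    rw [Set.mem_iInter] at hp
    obtain ⟨_, ⟨n, rfl⟩, hpn, hnR⟩ := hV.exists_subset_of_mem_open
      (hRB p (hp 0).1) isClosed_closure.isOpen_compl
    obtain ⟨q, ⟨hqR, hqn⟩, hqp⟩ := (hp n).2.resolve_right (not_not_intro hpn)
    exact hnR hqn (subset_closure (hqp ▸ hqR))
  obtain ⟨E, hE, hCE, hEempty⟩ := NovikovSeparated.of_analyticSet hC hCempty
  have hsep : ∀ n, MeasurablySeparable (Prod.fst '' (B ∩ (E n)ᶜ)) (Q n) := fun n => by
    refine AnalyticSet.measurablySeparable ((analyticSet_inter hB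
      (hE n).compl.analyticSet).image_of_continuous continuous_fst) (hQ n) ?_
    rw [Set.disjoint_left]
    rintro _ ⟨p, ⟨hpB, hpE⟩, rfl⟩ hpQ
    exact hpE (hCE n ⟨hpB, .inl hpQ⟩)
  choose P hBP hQP hP using hsep
  refine mem_of_superset (mem_sectionNhds ⟨P, V, hP, hVopen, rfl⟩ fun p hp => ?_)
    (Set.iUnion_subset fun n p hp hpR => (hQP n).notMem_of_mem_left ⟨p, ⟨hpR, hp.2⟩, rfl⟩ hp.1)
  obtain ⟨n, hn⟩ : ∃ n, p ∉ E n := by simpa using (hEempty ▸ Set.notMem_empty p : p ∉ ⋂ n, E n)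
  exact Set.mem_iUnion.2 ⟨n, hBP n ⟨p, ⟨hp, hn⟩, rfl⟩, by_contra fun h => hn (hCE n ⟨hp, .inr h⟩)⟩

end SectionTopology

section Fusion

/-- A countable array of points of Baire space, seen as a sequence of rows `(w, v)`: in the
construction `w` parametrizes a point of `B`, and the sequence `v` parametrizes points of the
complementary set `A` converging to it. -/
abbrev Rows : Type := ℕ → (ℕ → ℕ) × (ℕ → ℕ → ℕ)

instance : PolishSpace Rows := ⟨⟩

variable {X Y : Type*} [MetricSpace Y]

/-- A row `(w, v)` whose points `f (v k)` tend to `g w` inside the vertical section over `x`. -/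
def IsApproxRow (f g : (ℕ → ℕ) → X × Y) (x : X) (a : (ℕ → ℕ) × (ℕ → ℕ → ℕ)) : Prop :=
  (g a.1).1 = x ∧ ∀ k, (f (a.2 k)).1 = x ∧ dist (f (a.2 k)).2 (g a.1).2 ≤ (1 / 2) ^ k

theorem isClosed_setOf_isApproxRow [TopologicalSpace X] [T2Space X] {f g : (ℕ → ℕ) → X × Y}
    (hf : Continuous f) (hg : Continuous g) {x : Rows → X} (hx : Continuous x) (j : ℕ) :
    IsClosed {p : Rows | IsApproxRow f g (x p) (p j)} := by
  simp only [IsApproxRow, Set.ofPred_and, Set.ofPred_forall]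
  refine .inter (isClosed_eq (by fun_prop) hx) (isClosed_iInter fun k => ?_)
  exact .inter (isClosed_eq (by fun_prop) hx) (isClosed_le (by fun_prop) continuous_const)

/-- The arrays of `S` whose row `j + 1` is an approximating row with all points taken from
position `(i, l)` of arrays in `S`. -/
def branchSet (f g : (ℕ → ℕ) → X × Y) (j i l : ℕ) (S : Set Rows) : Set Rows :=
  {p ∈ S | IsApproxRow f g (f ((p 0).2 0)).1 (p (j + 1)) ∧
    ∀ k, (p (j + 1)).2 k ∈ (fun q => (q i).2 l) '' S}

theorem branchSet_mono {f g : (ℕ → ℕ) → X × Y} {j i l : ℕ} :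
    Monotone (branchSet f g j i l) := fun _ _ hST _ hp =>
  ⟨hST hp.1, hp.2.1, fun k => Set.image_mono hST (hp.2.2 k)⟩

theorem analyticSet_branchSet [TopologicalSpace X] [T2Space X] {f g : (ℕ → ℕ) → X × Y}
    (hf : Continuous f) (hg : Continuous g) {j i l : ℕ} {S : Set Rows} (hS : AnalyticSet S) :
    AnalyticSet (branchSet f g j i l S) := by
  have himage : AnalyticSet ((fun q : Rows => (q i).2 l) '' S) :=
    hS.image_of_continuous (by fun_prop)
  have happrox : IsClosed {p : Rows | IsApproxRow f g (f ((p 0).2 0)).1 (p (j + 1))} :=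
    isClosed_setOf_isApproxRow hf hg (by fun_prop) _
  have hsplit : branchSet f g j i l S =
      S ∩ ({p | IsApproxRow f g (f ((p 0).2 0)).1 (p (j + 1))} ∩
        ⋂ k, (fun p : Rows => (p (j + 1)).2 k) ⁻¹' ((fun q => (q i).2 l) '' S)) := by
    ext p
    simp only [branchSet, Set.mem_ofPred_eq, Set.mem_inter_iff, Set.mem_iInter, Set.mem_preimage]
  rw [hsplit]
  exact analyticSet_inter hS (analyticSet_inter happrox.analyticSet
    (.iInter fun k => himage.preimage (by fun_prop)))

theorem exists_mem_of_isGδ_of_approxRows [TopologicalSpace X] [T2Space X]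
    {f g : (ℕ → ℕ) → X × Y} (hf : Continuous f) {p : Rows} {x : X} {D : Set Y}
    (hD : IsGδ D) (hgD : ∀ w, (g w).1 = x → (g w).2 ∈ D) (hpx : ∀ i l, (f ((p i).2 l)).1 = x)
    (hp : ∀ i l N, ∃ j, IsApproxRow f g x (p j) ∧
      ∀ k, (p j).2 k ∈ PiNat.cylinder ((p i).2 l) N) :
    ∃ z, (f z).1 = x ∧ (f z).2 ∈ D := by
  obtain ⟨W, hW, rfl⟩ := hD.eq_iInter_nat
  let F : Set (ℕ → ℕ) := closure {z | ∃ i l, (p i).2 l = z}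
  have hF : ∀ i l, (p i).2 l ∈ F := fun i l => subset_closure ⟨i, l, rfl⟩
  have : PolishSpace F := isClosed_closure.polishSpace
  have hdense : ∀ n, Dense {z : F | (f z).2 ∈ W n} := fun n => by
    refine Subtype.dense_iff.2 (closure_minimal ?_ isClosed_closure)
    rintro _ ⟨i, l, rfl⟩
    refine mem_closure_iff_nhds.2 fun U hU => ?_
    obtain ⟨N, hN⟩ := exists_cylinder_subset hU
    obtain ⟨j, ⟨hgx, hrow⟩, hcyl⟩ := hp i l N
    obtain ⟨ε, hε, hball⟩ :=
      Metric.isOpen_iff.1 (hW n) _ (Set.mem_iInter.1 (hgD _ hgx) n)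
    obtain ⟨k, hk⟩ := exists_pow_lt_of_lt_one hε (by norm_num : (1 / 2 : ℝ) < 1)
    exact ⟨(p j).2 k, hN (hcyl k), ⟨_, hF j k⟩, hball ((hrow k).2.trans_lt hk), rfl⟩
  obtain ⟨z, hz⟩ : (⋂ n, {z : F | (f z).2 ∈ W n}).Nonempty := by
    have : Nonempty F := ⟨⟨_, hF 0 0⟩⟩
    exact (dense_iInter_of_isOpen_nat (fun n => (hW n).preimage (by fun_prop)) hdense).nonempty
  have hclosed : IsClosed {z | (f z).1 = x} := isClosed_eq (by fun_prop) continuous_const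
  refine ⟨z, closure_minimal ?_ hclosed z.2, by simpa using hz⟩
  rintro _ ⟨i, l, rfl⟩
  exact hpx i l

variable [MeasurableSpace X]

/-- A stage of the fusion argument, with `j + 1` active rows: a countably complete filter of
arrays, generated by analytic sets, along which all the points `f (v l)` of the active rows stay in
one vertical section and in every set of `sectionNhds B`. -/
structure IsStage (f : (ℕ → ℕ) → X × Y) (B : Set (X × Y)) (j : ℕ) (L : Filter Rows) : Prop where
  neBot : L.NeBot
  countableInterFilter : CountableInterFilter L
  exists_analyticSet : ∀ S ∈ L, ∃ T ∈ L, T ⊆ S ∧ AnalyticSet T ∧ DependsOn (· ∈ T) (Set.Iic j)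
  tendsto : ∀ i ≤ j, ∀ l, Tendsto (fun p => f ((p i).2 l)) L (sectionNhds B)
  fst_eq : ∀ᶠ p in L, ∀ i ≤ j, ∀ l, (f ((p i).2 l)).1 = (f ((p 0).2 0)).1

variable {f g : (ℕ → ℕ) → X × Y} {B : Set (X × Y)} {j : ℕ} {L : Filter Rows}

theorem IsStage.exists_inf_principal (hL : IsStage f B j L) {α : Type*} [Countable α]
    [TopologicalSpace α] [DiscreteTopology α] {d : Rows → α} (hd : Continuous d)
    (hdep : DependsOn d (Set.Iic j)) : ∃ a, IsStage f B j (L ⊓ 𝓟 (d ⁻¹' {a})) := by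
  have := hL.countableInterFilter
  obtain ⟨a, ha⟩ : ∃ a, ∃ᶠ p in L, d p = a := by
    by_contra! h
    have := hL.neBot
    obtain ⟨p, hp⟩ := (eventually_countable_forall.2 h).exists
    exact hp (d p) rfl
  refine ⟨a, inf_principal_neBot_iff.2 fun S hS => ?_, inferInstance, fun S hS => ?_,
    fun i hi l => (hL.tendsto i hi l).mono_left inf_le_left, hL.fst_eq.filter_mono inf_le_left⟩
  · exact (ha.and_eventually hS).exists.imp fun p hp => ⟨hp.2, hp.1⟩
  · obtain ⟨T, hT, hTS, hTan, hTdep⟩ := hL.exists_analyticSet _ (mem_inf_principal.1 hS)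
    refine ⟨T ∩ d ⁻¹' {a}, inter_mem_inf hT (mem_principal_self _), fun p hp => hTS hp.1 hp.2,
      analyticSet_inter hTan ((isClosed_discrete _).preimage hd).analyticSet, fun p q hpq => ?_⟩
    exact congr_arg₂ And (hTdep hpq) (congr_arg (· = a) (hdep hpq))

variable [TopologicalSpace X] [PolishSpace X] [BorelSpace X] [PolishSpace Y]

theorem exists_isStage_zero (hf : Continuous f)
    (hB : (Set.range f)ᶜ ∉ sectionNhds B) : ∃ L, IsStage f B 0 L := by
  let C : Set Rows := {p | ∀ l, (p 0).2 l = (p 0).2 0}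
  have hC : IsClosed C := by
    simp only [C, Set.ofPred_forall]
    exact isClosed_iInter fun l => isClosed_eq (by fun_prop) (by fun_prop)
  have hf0 : Continuous fun p : Rows => f ((p 0).2 0) := by fun_prop
  refine ⟨comap (fun p => f ((p 0).2 0)) (sectionNhds B) ⊓ 𝓟 C, ?_, inferInstance, ?_, ?_, ?_⟩
  · refine inf_principal_neBot_iff.2 fun S hS => ?_
    obtain ⟨D, hD, hDS⟩ := mem_comap.1 hS
    obtain ⟨_, hvD, v, rfl⟩ : (D ∩ Set.range f).Nonempty := by
      by_contra h
      exact hB (mem_of_superset hD (Set.subset_compl_iff_disjoint_right.2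
        (Set.disjoint_iff_inter_eq_empty.2 (Set.not_nonempty_iff_eq_empty.1 h))))
    exact ⟨fun _ => (v, fun _ => v), hDS hvD, fun l => rfl⟩
  · intro S hS
    obtain ⟨D, hD, hDS⟩ := mem_comap.1 (mem_inf_principal.1 hS)
    obtain ⟨U, hU, hBU, hUD⟩ := exists_iInter_subset_of_mem_sectionNhds hD
    have hUnhds : ⋂ n, U n ∈ sectionNhds B := countable_iInter_mem.2 fun n =>
      mem_sectionNhds (hU n) (hBU.trans (Set.iInter_subset U n))
    borelize Y
    refine ⟨(fun p => f ((p 0).2 0)) ⁻¹' (⋂ n, U n) ∩ C,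
      inter_mem_inf (preimage_mem_comap hUnhds) (mem_principal_self C),
      fun p hp => hDS (hUD hp.1) hp.2,
      analyticSet_inter
        ((MeasurableSet.iInter fun n => (hU n).measurableSet).analyticSet.preimage hf0)
        hC.analyticSet, fun p q hpq => ?_⟩
    have h0 : p 0 = q 0 := hpq 0 (Set.mem_Iic.2 le_rfl)
    simp only [C, Set.mem_inter_iff, Set.mem_preimage, Set.mem_ofPred_eq, h0]
  · rintro i hi l
    obtain rfl : i = 0 := by omega
    refine (tendsto_comap.mono_left inf_le_left).congr' ?_
    filter_upwards [mem_inf_of_right (mem_principal_self C)] with p hp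
    rw [hp l]
  · filter_upwards [mem_inf_of_right (mem_principal_self C)] with p hp i hi l
    obtain rfl : i = 0 := by omega
    rw [hp l]

theorem IsStage.nonempty_branchSet (hf : Continuous f) (hg : Continuous g)
    (hgB : Set.range g = B) (hL : IsStage f B j L) {i : ℕ} (hi : i ≤ j) (l : ℕ) {S : Set Rows}
    (hS : S ∈ L) : (branchSet f g j i l S).Nonempty := by
  obtain ⟨T, hT, hTS, hTan, hTdep⟩ := hL.exists_analyticSet _ (inter_mem hS hL.fst_eq)
  have := hL.neBot
  obtain ⟨w, hw⟩ : ∃ w, (g w).2 ∈ closure {y | ((g w).1, y) ∈ (fun p => f ((p i).2 l)) '' T} := by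
    by_contra! h
    have hR : ((fun p => f ((p i).2 l)) '' T)ᶜ ∈ sectionNhds B := by
      refine compl_mem_sectionNhds (hTan.image_of_continuous (by fun_prop))
        (hgB ▸ analyticSet_range_of_polishSpace hg) ?_
      rw [← hgB]
      exact Set.forall_mem_range.2 h
    obtain ⟨p, hp, hpT⟩ := ((hL.tendsto i hi l).eventually hR |>.and hT).exists
    exact hp ⟨p, hpT, rfl⟩
  have happrox : ∀ k : ℕ, ∃ p ∈ T, (f ((p i).2 l)).1 = (g w).1 ∧
      dist (f ((p i).2 l)).2 (g w).2 ≤ (1 / 2) ^ k := fun k => by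
    obtain ⟨y, ⟨p, hpT, (hp : f ((p i).2 l) = _)⟩, hy⟩ :=
      Metric.mem_closure_iff.1 hw ((1 / 2) ^ k) (by positivity)
    obtain ⟨hfst, hsnd⟩ := Prod.ext_iff.1 hp
    exact ⟨p, hpT, hfst, by rw [hsnd, dist_comm]; exact hy.le⟩
  choose p hpT hpfst hpdist using happrox
  let q := Function.update (p 0) (j + 1) (w, fun k => (p k i).2 l)
  have hq : ∀ m ≤ j, q m = p 0 m := fun m hm => Function.update_of_ne (by omega) _ _
  have hqj : q (j + 1) = (w, fun k => (p k i).2 l) := Function.update_self ..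
  have hqT : q ∈ T := (hTdep fun m hm => hq m hm).mpr (hpT 0)
  refine ⟨q, (hTS hqT).1, ?_, fun k => ⟨p k, (hTS (hpT k)).1, by rw [hqj]⟩⟩
  rw [hqj, hq 0 j.zero_le, ← (hTS (hpT 0)).2 i hi l, hpfst]
  exact ⟨rfl, fun k => ⟨hpfst k, hpdist k⟩⟩

theorem IsStage.lift'_branchSet (hf : Continuous f) (hg : Continuous g)
    (hgB : Set.range g = B) (hL : IsStage f B j L) {i : ℕ} (hi : i ≤ j) (l : ℕ) :
    IsStage f B (j + 1) (L.lift' (branchSet f g j i l)) := by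
  have := hL.countableInterFilter
  have hle : L.lift' (branchSet f g j i l) ≤ L := fun S hS =>
    (mem_lift'_sets branchSet_mono).2 ⟨S, hS, fun p hp => hp.1⟩
  refine ⟨(lift'_neBot_iff branchSet_mono).2 fun S hS => hL.nonempty_branchSet hf hg hgB hi l hS,
    ⟨fun 𝒮 hcount h𝒮 => ?_⟩, fun S hS => ?_, fun m hm k => ?_, ?_⟩
  · choose! T hT hTS using fun S hS => (mem_lift'_sets branchSet_mono).1 (h𝒮 S hS)
    refine mem_of_superset (mem_lift' ((countable_bInter_mem hcount).2 hT))
      (Set.subset_sInter fun S hS => (branchSet_mono ?_).trans (hTS S hS))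
    exact Set.biInter_subset_of_mem hS
  · obtain ⟨S', hS', hS'S⟩ := (mem_lift'_sets branchSet_mono).1 hS
    obtain ⟨T, hT, hTS', hTan, hTdep⟩ := hL.exists_analyticSet S' hS'
    refine ⟨branchSet f g j i l T, mem_lift' hT, (branchSet_mono hTS').trans hS'S,
      analyticSet_branchSet hf hg hTan, fun p q hpq => ?_⟩
    have hT' : (p ∈ T) = (q ∈ T) :=
      hTdep fun m hm => hpq m (Set.mem_Iic.2 ((Set.mem_Iic.1 hm).trans j.le_succ))
    have h0 : p 0 = q 0 := hpq 0 (Set.mem_Iic.2 (Nat.zero_le _))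
    have hj : p (j + 1) = q (j + 1) := hpq (j + 1) (Set.mem_Iic.2 le_rfl)
    simp only [branchSet, Set.mem_ofPred_eq, hT', h0, hj]
  · obtain hm | rfl := Nat.le_succ_iff.1 hm
    · exact (hL.tendsto m hm k).mono_left hle
    · intro D hD
      refine mem_map.2 (mem_of_superset (mem_lift' (hL.tendsto i hi l hD)) fun p hp => ?_)
      obtain ⟨q, hq, hqp⟩ := hp.2.2 k
      exact Set.mem_preimage.2 (hqp ▸ hq)
  · filter_upwards [mem_lift' hL.fst_eq] with p hp m hm k
    obtain hm | rfl := Nat.le_succ_iff.1 hm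
    · exact hp.1 m hm k
    · exact (hp.2.1.2 k).1

theorem IsStage.exists_next (hf : Continuous f) (hg : Continuous g) (hgB : Set.range g = B)
    (hL : IsStage f B j L) {i : ℕ} (hi : i ≤ j) (l N : ℕ) :
    ∃ L' ≤ L, IsStage f B (j + 1) L' ∧
      (∀ m < N, (∃ a, ∀ᶠ p in L', (p i).1 m = a) ∧ ∃ a, ∀ᶠ p in L', (p i).2 l m = a) ∧
      ∀ᶠ p in L', IsApproxRow f g (f ((p 0).2 0)).1 (p (j + 1)) ∧
        ∀ k, (p (j + 1)).2 k ∈ PiNat.cylinder ((p i).2 l) N := by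
  let d (p : Rows) : (Fin N → ℕ) × (Fin N → ℕ) := (fun m => (p i).1 m, fun m => (p i).2 l m)
  have hdep : DependsOn d (Set.Iic j) := fun p q hpq => by simp only [d, hpq i hi]
  obtain ⟨a, ha⟩ := hL.exists_inf_principal (by fun_prop : Continuous d) hdep
  set M := L ⊓ 𝓟 (d ⁻¹' {a})
  have hd : d ⁻¹' {a} ∈ M := mem_inf_of_right (mem_principal_self _)
  have hle : M.lift' (branchSet f g j i l) ≤ M := fun S hS =>
    mem_of_superset (mem_lift' hS) fun p hp => hp.1
  have hdigit : ∀ p ∈ d ⁻¹' {a}, ∀ m (hm : m < N),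
      (p i).1 m = a.1 ⟨m, hm⟩ ∧ (p i).2 l m = a.2 ⟨m, hm⟩ := by
    rintro p rfl m hm
    exact ⟨rfl, rfl⟩
  refine ⟨_, hle.trans inf_le_left, ha.lift'_branchSet hf hg hgB hi l, fun m hm =>
    ⟨⟨_, mem_of_superset (hle hd) fun p hp => (hdigit p hp m hm).1⟩,
      ⟨_, mem_of_superset (hle hd) fun p hp => (hdigit p hp m hm).2⟩⟩, ?_⟩
  filter_upwards [mem_lift' hd] with p hp
  refine ⟨hp.2.1, fun k m hm => ?_⟩
  obtain ⟨q, hq, hqp⟩ := hp.2.2 k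
  rw [← hqp, (hdigit p hp.1 m hm).2, ← (hdigit q hq m hm).2]

theorem exists_approxRows (hf : Continuous f) (hg : Continuous g) (hgB : Set.range g = B)
    (hB : (Set.range f)ᶜ ∉ sectionNhds B) :
    ∃ (p : Rows) (x : X), (∀ i l, (f ((p i).2 l)).1 = x) ∧
      ∀ i l N, ∃ j, IsApproxRow f g x (p j) ∧
        ∀ k, (p j).2 k ∈ PiNat.cylinder ((p i).2 l) N := by
  obtain ⟨L₀, hL₀⟩ := exists_isStage_zero hf hB
  choose next hle hstage hdigit hrow using fun n (L : {L // IsStage f B n L}) =>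
    L.2.exists_next hf hg hgB n.unpair_left_le n.unpair.2.unpair.1 n.unpair.2.unpair.2
  let L : ∀ n, {L // IsStage f B n L} := fun n =>
    n.rec ⟨L₀, hL₀⟩ fun n L => ⟨next n L, hstage n L⟩
  have hanti : Antitone fun n => (L n).1 := antitone_nat_of_succ_le fun n => hle n (L n)
  have : (⨅ n, (L n).1).NeBot :=
    iInf_neBot_of_directed' hanti.directed_ge fun n => (L n).2.neBot
  have hev : ∀ {P : Rows → Prop} n, (∀ᶠ p in (L n).1, P p) → ∀ᶠ p in ⨅ n, (L n).1, P p :=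
    fun n h => h.filter_mono (iInf_le _ n)
  have hdecided : ∀ i l m, (∃ a, ∀ᶠ p in ⨅ n, (L n).1, (p i).1 m = a) ∧
      ∃ a, ∀ᶠ p in ⨅ n, (L n).1, (p i).2 l m = a := fun i l m => by
    have h := hdigit (Nat.pair i (Nat.pair l (m + 1))) (L _) m
    simp only [Nat.unpair_pair, m.lt_succ_self, true_imp_iff] at h
    exact h.imp (fun ⟨a, ha⟩ => ⟨a, hev (_ + 1) ha⟩) fun ⟨a, ha⟩ => ⟨a, hev (_ + 1) ha⟩
  choose a ha using fun i m => (hdecided i 0 m).1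
  choose b hb using fun i l m => (hdecided i l m).2
  have hlim : Tendsto id (⨅ n, (L n).1) (𝓝 fun i => (a i, b i)) :=
    tendsto_pi_nhds.2 fun i => Tendsto.prodMk_nhds
      (tendsto_pi_nhds.2 fun m => EventuallyEq.tendsto (ha i m))
      (tendsto_pi_nhds.2 fun l => tendsto_pi_nhds.2 fun m => EventuallyEq.tendsto (hb i l m))
  refine ⟨fun i => (a i, b i), (f (b 0 0)).1, fun i l => ?_, fun i l N => ?_⟩
  · have hK : IsClosed {p : Rows | (f ((p i).2 l)).1 = (f ((p 0).2 0)).1} :=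
      isClosed_eq (by fun_prop) (by fun_prop)
    exact hK.mem_of_tendsto hlim (hev i ((L i).2.fst_eq.mono fun p hp => hp i le_rfl l))
  · set j := Nat.pair i (Nat.pair l N) with hj
    have hcyl : IsClosed {p : Rows | ∀ k, (p (j + 1)).2 k ∈ PiNat.cylinder ((p i).2 l) N} := by
      simp only [PiNat.mem_cylinder_iff, Set.ofPred_forall]
      exact isClosed_iInter fun k => isClosed_iInter fun m => isClosed_iInter fun _ =>
        isClosed_eq (by fun_prop) (by fun_prop)
    have hK := (isClosed_setOf_isApproxRow hf hg
      (by fun_prop : Continuous fun p : Rows => (f ((p 0).2 0)).1) (j + 1)).inter hcyl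
    have hrow' := hrow j (L j)
    simp only [hj, Nat.unpair_pair] at hrow'
    exact ⟨j + 1, hK.mem_of_tendsto hlim (hev (j + 1) hrow')⟩

theorem compl_mem_sectionNhds_of_isGδ {A : Set (X × Y)} (hA : AnalyticSet A)
    (hB : AnalyticSet B) (hAB : Disjoint A B) (hsec : ∀ x, IsGδ {y | (x, y) ∈ B}) :
    Aᶜ ∈ sectionNhds B := by
  rw [AnalyticSet] at hA hB
  obtain rfl | ⟨f, hf, rfl⟩ := hA
  · simp
  obtain rfl | ⟨g, hg, hgB⟩ := hB
  · exact mem_of_superset (mem_sectionNhds isMeasurableOpen_empty subset_rfl) (Set.empty_subset _)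
  by_contra hnot
  obtain ⟨p, x, hpx, hp⟩ := exists_approxRows hf hg hgB hnot
  obtain ⟨z, rfl, hzB⟩ := exists_mem_of_isGδ_of_approxRows hf (hsec x)
    (fun w hw => by rw [← hw]; exact hgB.subset ⟨w, rfl⟩) hpx hp
  exact hAB.notMem_of_mem_left ⟨z, rfl⟩ hzB

end Fusion

section Cylinders

@[simp] theorem length_seg (β : ℕ → Bool) (n : ℕ) : (seg β n).length = n := List.length_ofFn

theorem seg_succ (β : ℕ → Bool) (n : ℕ) : seg β (n + 1) = seg β n ++ [β n] := by
  rw [seg, List.ofFn_succ_last]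
  rfl

theorem take_seg (β : ℕ → Bool) {k n : ℕ} (h : k ≤ n) : (seg β n).take k = seg β k :=
  List.ext_getElem (by simpa using h) (by simp [seg])

theorem mem_cyl_iff {β : ℕ → Bool} {s : List Bool} : β ∈ cyl s ↔ seg β s.length = s := by
  refine ⟨fun h => List.ext_getElem (by simp) fun i _ hi => ?_, fun h => ?_⟩
  · simpa [seg] using h ⟨i, hi⟩
  · exact fun i => by simpa [seg] using (List.getElem_of_eq h.symm i.2).symm

theorem exists_seg_eq (s : List Bool) : ∃ β, seg β s.length = s :=
  ⟨fun i => s.getD i false, List.ext_getElem (by simp) fun i _ _ => by simp [seg]⟩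

theorem cyl_seg (β : ℕ → Bool) (n : ℕ) : cyl (seg β n) = PiNat.cylinder β n := by
  ext γ
  refine ⟨fun h i hi => by simpa [seg] using h ⟨i, by simpa using hi⟩, fun h i => ?_⟩
  rw [h i (by simpa using i.2), List.get_eq_getElem]
  simp [seg]

theorem mem_cyl_seg (β : ℕ → Bool) (n : ℕ) : β ∈ cyl (seg β n) := by
  rw [mem_cyl_iff, length_seg]

theorem cyl_append_singleton (s : List Bool) (b : Bool) :
    cyl (s ++ [b]) = cyl s ∩ {β | β s.length = b} := by
  ext β
  rw [Set.mem_inter_iff, mem_cyl_iff, mem_cyl_iff, List.length_append, List.length_singleton,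
    seg_succ, List.append_singleton_inj]
  rfl

theorem isClopen_cyl (s : List Bool) : IsClopen (cyl s) := by
  simp only [cyl, Set.ofPred_forall]
  exact isClopen_iInter_of_finite fun i => (isClopen_discrete {s.get i}).preimage (by fun_prop)

end Cylinders

section GδSections

theorem exists_eq_iInter_isMeasurableOpen {X Y : Type*} [MeasurableSpace X]
    [StandardBorelSpace X] [TopologicalSpace Y] [PolishSpace Y] [MeasurableSpace Y]
    [BorelSpace Y] {G : Set (X × Y)} (hG : MeasurableSet G)
    (hsec : ∀ x, IsGδ {y | (x, y) ∈ G}) :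
    ∃ U : ℕ → Set (X × Y), (∀ n, IsMeasurableOpen (U n)) ∧ G = ⋂ n, U n := by
  let := upgradeStandardBorel X
  let := TopologicalSpace.upgradeIsCompletelyMetrizable Y
  obtain ⟨U, hU, hGU, hUG⟩ := exists_iInter_subset_of_mem_sectionNhds <|
    compl_mem_sectionNhds_of_isGδ hG.compl.analyticSet hG.analyticSet
      disjoint_compl_left hsec
  exact ⟨U, hU, hGU.antisymm (by rwa [compl_compl] at hUG)⟩

theorem frequently_exists_step_iff {E : ℕ → ℕ → Prop} (hle : ∀ n m, E n m → n ≤ m)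
    (hanti : ∀ m, Antitone (E · m)) (hmono : ∀ n, Monotone (E n)) :
    (∃ᶠ m in atTop, ∃ n, E n (m + 1) ∧ ¬ E n m) ↔ ∀ n, ∃ m, E n m := by
  refine ⟨fun hfreq N => ?_, fun h => frequently_atTop.2 fun N => ?_⟩
  · by_contra! hN
    have hev : ∀ n, ∀ᶠ m in atTop, ¬ (E n (m + 1) ∧ ¬ E n m) := fun n => by
      by_cases hn : ∃ m, E n m
      · obtain ⟨M, hM⟩ := hn
        filter_upwards [eventually_ge_atTop M] with m hm h
        exact h.2 (hmono n hm hM)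
      · exact .of_forall fun m h => hn ⟨_, h.1⟩
    obtain ⟨m, ⟨n, hn⟩, hm⟩ :=
      (hfreq.and_eventually ((Set.finite_Iio N).eventually_all.2 fun n _ => hev n)).exists
    by_cases hnN : n < N
    · exact hm n hnN hn
    · exact hN (m + 1) (hanti _ (not_lt.1 hnN) hn.1)
  · classical
    have hex := h (N + 1)
    obtain ⟨m, hm⟩ : ∃ m, Nat.find hex = m + 1 :=
      Nat.exists_eq_add_one.2 (N.succ_pos.trans_le (hle _ _ (Nat.find_spec hex)))
    have hspec : E (N + 1) (m + 1) := hm ▸ Nat.find_spec hex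
    exact ⟨m, Nat.le_of_succ_le_succ (hle _ _ hspec), N + 1, hspec,
      Nat.find_min hex (hm ▸ m.lt_succ_self)⟩

theorem exists_measurable_frequently_seg_mem_iff {X : Type*} [MeasurableSpace X]
    [StandardBorelSpace X] {G : Set (X × (ℕ → Bool))} (hG : MeasurableSet G)
    (hsec : ∀ x, IsGδ {β | (x, β) ∈ G}) :
    ∃ A : X → Set (List Bool), (∀ s, MeasurableSet {x | s ∈ A x}) ∧
      ∀ x β, (x, β) ∈ G ↔ ∃ᶠ n in atTop, seg β n ∈ A x := by
  have : PolishSpace (ℕ → Bool) := ⟨⟩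
  obtain ⟨U, hU, rfl⟩ := exists_eq_iInter_isMeasurableOpen hG hsec
  let E (x : X) (n : ℕ) (s : List Bool) : Prop :=
    n ≤ s.length ∧ ∀ k ≤ n, ∀ β ∈ cyl s, (x, β) ∈ U k
  have hE : ∀ n s, Measurable fun x => E x n s := fun n s =>
    measurable_const.and (.forall fun k => .forall fun _ => measurableSet_setOfPred.1
      ((hU k).measurableSet_forall_mem (isClopen_cyl s).isClosed.isCompact))
  refine ⟨fun x => {s | ∃ n, E x n s ∧ ¬ E x n s.dropLast}, fun s => measurableSet_setOfPred.2
    (.exists fun n => (hE n s).and (hE n s.dropLast).not), fun x β => ?_⟩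
  have hcyl : Antitone fun m => cyl (seg β m) := fun m m' hm => by
    simpa only [cyl_seg] using PiNat.cylinder_anti β hm
  have hmono : ∀ n, Monotone fun m => E x n (seg β m) := fun n m m' hm h =>
    ⟨h.1.trans (by simpa using hm), fun k hk γ hγ => h.2 k hk γ (hcyl hm hγ)⟩
  rw [← map_add_atTop_eq_nat 1, frequently_map]
  simp only [Set.mem_ofPred_eq, seg_succ, List.dropLast_concat]
  simp only [← seg_succ]
  rw [frequently_exists_step_iff (E := fun n m => E x n (seg β m))
    (fun n m h => by simpa using h.1)
    (fun m n n' hn h => ⟨hn.trans h.1, fun k hk => h.2 k (hk.trans hn)⟩) hmono, Set.mem_iInter]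
  refine ⟨fun h n => ?_, fun h n => ?_⟩
  · have hnhds : ∀ᶠ γ in 𝓝 β, ∀ k ≤ n, (x, γ) ∈ U k :=
      (Set.finite_Iic n).eventually_all.2 fun k _ => ((hU k).isOpen_section x).mem_nhds (h k)
    obtain ⟨m, hm⟩ := exists_cylinder_subset hnhds
    refine ⟨max n m, by simp, fun k hk γ hγ => hm ?_ k hk⟩
    exact cyl_seg β m ▸ hcyl (le_max_right n m) hγ
  · obtain ⟨m, hm⟩ := h n
    exact hm.2 n le_rfl β (mem_cyl_seg β m)

end GδSections

section Processes

/-- The averaging identity of martingales on the binary tree, without any bound on the values. -/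
def IsFair (M : List Bool → ℝ) : Prop :=
  ∀ s, M s = (M (s ++ [false]) + M (s ++ [true])) / 2

/-- A transformation of real sequences is causal if its value at time `n` depends only on the
terms of the sequence up to time `n`. -/
def IsCausal (Φ : (ℕ → ℝ) → ℕ → ℝ) : Prop :=
  ∀ n d d', (∀ k ≤ n, d k = d' k) → Φ d n = Φ d' n

/-- `Φ` is a martingale transform: each increment of `Φ d` is the corresponding increment of `d`,
multiplied by a position chosen beforehand. -/
structure IsTransform (Φ : (ℕ → ℝ) → ℕ → ℝ) : Prop where
  isCausal : IsCausal Φ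
  exists_position : ∃ H, IsCausal H ∧
    ∀ d n, Φ d (n + 1) = Φ d n + H d n * (d (n + 1) - d n)

/-- The process whose value at `s` is the last value of the transformation `Φ` applied to the
values of `M` along the initial segments of `s`. -/
def pathwise (Φ : (ℕ → ℝ) → ℕ → ℝ) (M : List Bool → ℝ) (s : List Bool) : ℝ :=
  Φ (fun k => M (s.take k)) s.length

variable {Φ : (ℕ → ℝ) → ℕ → ℝ} {M : List Bool → ℝ}

theorem IsCausal.pathwise_seg (hΦ : IsCausal Φ) (M : List Bool → ℝ) (β : ℕ → Bool) (n : ℕ) :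
    pathwise Φ M (seg β n) = Φ (fun k => M (seg β k)) n := by
  rw [pathwise, length_seg]
  exact hΦ n _ _ fun k hk => by rw [take_seg β hk]

theorem IsFair.pathwise_of_isTransform (hM : IsFair M) (hΦ : IsTransform Φ) :
    IsFair (pathwise Φ M) := fun s => by
  obtain ⟨hcausal, H, hH, hstep⟩ := hΦ
  have hpath : ∀ b, ∀ k ≤ s.length, M ((s ++ [b]).take k) = M (s.take k) :=
    fun b k hk => by rw [List.take_append_of_le_length hk]
  have hsucc : ∀ b, pathwise Φ M (s ++ [b]) = pathwise Φ M s +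
      H (fun k => M (s.take k)) s.length * (M (s ++ [b]) - M s) := fun b => by
    simp only [pathwise, List.length_append, List.length_singleton]
    rw [hstep, hcausal _ _ _ (hpath b), hH _ _ _ (hpath b), List.take_of_length_le (by simp),
      List.take_left' rfl]
  rw [hsucc, hsucc]
  linear_combination H (fun k => M (s.take k)) s.length * hM s

theorem IsFair.append_singleton_le (hM : IsFair M) (h0 : ∀ s, 0 ≤ M s) (s : List Bool) (b : Bool) :
    M (s ++ [b]) ≤ 2 * M s := by
  have hs := hM s
  cases b
  · linarith [h0 (s ++ [true])]
  · linarith [h0 (s ++ [false])]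

theorem IsFair.le_two_pow_mul (hM : IsFair M) (h0 : ∀ s, 0 ≤ M s) (s : List Bool) :
    M s ≤ 2 ^ s.length * M [] := by
  induction s using List.reverseRecOn with
  | nil => simp
  | append_singleton s b ih =>
    rw [List.length_append, List.length_singleton, pow_succ']
    linarith [hM.append_singleton_le h0 s b]

end Processes

section Stopping

variable {c : ℝ} {t : ℕ → ℝ} {n : ℕ}

open Classical in
/-- The sequence `t` stopped at the first time its value is at least `c`. -/
noncomputable def stopped (c : ℝ) (t : ℕ → ℝ) : ℕ → ℝ
  | 0 => t 0
  | n + 1 => if ∀ k ≤ n, t k < c then t (n + 1) else stopped c t n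

theorem stopped_eq_self (h : ∀ k < n, t k < c) : stopped c t n = t n := by
  cases n with
  | zero => rfl
  | succ n => exact if_pos fun k hk => h k (Nat.lt_succ_of_le hk)

theorem exists_stopped_eq (c : ℝ) (t : ℕ → ℝ) (n : ℕ) : ∃ k, stopped c t n = t k := by
  induction n with
  | zero => exact ⟨0, rfl⟩
  | succ n ih =>
    rw [stopped]
    split_ifs
    exacts [⟨_, rfl⟩, ih]

theorem exists_eventually_stopped_eq (h : c ≤ t n) :
    ∃ v, c ≤ v ∧ ∀ᶠ n in atTop, stopped c t n = v := by
  classical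
  have hex : ∃ n, c ≤ t n := ⟨n, h⟩
  refine ⟨_, Nat.find_spec hex, ?_⟩
  filter_upwards [eventually_ge_atTop (Nat.find hex)] with n hn
  induction n, hn using Nat.le_induction with
  | base => exact stopped_eq_self fun k hk => not_le.1 (Nat.find_min hex hk)
  | succ n hn ih =>
    rw [stopped, if_neg fun h => (h _ hn).not_ge (Nat.find_spec hex), ih]

theorem exists_tendsto_stopped (h : (∀ n, t n < c) → ∃ l, Tendsto t atTop (𝓝 l)) :
    ∃ l, Tendsto (stopped c t) atTop (𝓝 l) := by
  by_cases ht : ∀ n, t n < c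
  · have heq : stopped c t = t := funext fun n => stopped_eq_self fun k _ => ht k
    rw [heq]
    exact h ht
  · push Not at ht
    obtain ⟨n, hn⟩ := ht
    obtain ⟨v, -, hv⟩ := exists_eventually_stopped_eq hn
    exact ⟨v, EventuallyEq.tendsto hv⟩

theorem IsCausal.stopped_comp {Φ : (ℕ → ℝ) → ℕ → ℝ} (hΦ : IsCausal Φ) (c : ℝ) :
    IsCausal fun d => stopped c (Φ d) := fun n => by
  induction n with
  | zero => exact hΦ 0
  | succ n ih =>
    intro d d' h
    have hΦn : ∀ k ≤ n + 1, Φ d k = Φ d' k := fun k hk => hΦ k _ _ fun i hi => h i (hi.trans hk)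
    have hlt : (∀ k ≤ n, Φ d k < c) ↔ ∀ k ≤ n, Φ d' k < c :=
      forall₂_congr fun k hk => by rw [hΦn k (hk.trans n.le_succ)]
    simp only [stopped, hlt, hΦn (n + 1) le_rfl,
      ih d d' fun k hk => h k (hk.trans n.le_succ)]

open Classical in
theorem IsTransform.stopped_comp {Φ : (ℕ → ℝ) → ℕ → ℝ} (hΦ : IsTransform Φ) (c : ℝ) :
    IsTransform fun d => stopped c (Φ d) := by
  obtain ⟨hcausal, H, hH, hstep⟩ := hΦ
  refine ⟨hcausal.stopped_comp c, fun d n => if ∀ k ≤ n, Φ d k < c then H d n else 0,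
    fun n d d' h => ?_, fun d n => ?_⟩
  · have hiff : (∀ k ≤ n, Φ d k < c) ↔ ∀ k ≤ n, Φ d' k < c := forall₂_congr fun k hk => by
      rw [hcausal k _ _ fun i hi => h i (hi.trans hk)]
    simp only [hiff, hH n _ _ h]
  · rw [stopped]
    beta_reduce
    split_ifs with h
    · rw [hstep, stopped_eq_self fun k hk => h k hk.le]
    · ring

end Stopping

section Upcrossings

/-- The profit at time `n` from holding the amount `h k` of a commodity between times `k` and
`k + 1`, when its price at time `k` is `d k`. -/
def gain (h d : ℕ → ℝ) (n : ℕ) : ℝ := ∑ k ∈ Finset.range n, h k * (d (k + 1) - d k)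

/-- The position of a trader who buys one unit when the price falls below `a` and sells it when the
price rises above `b`. -/
noncomputable def hold (a b : ℝ) (d : ℕ → ℝ) : ℕ → ℝ
  | 0 => if d 0 < a then 1 else 0
  | n + 1 => if d (n + 1) < a then 1 else if b < d (n + 1) then 0 else hold a b d n

theorem isCausal_hold (a b : ℝ) : IsCausal (hold a b) := fun n => by
  induction n with
  | zero => exact fun d d' h => by simp only [hold, h 0 le_rfl]
  | succ n ih =>
    exact fun d d' h => by
      simp only [hold, h (n + 1) le_rfl, ih d d' fun k hk => h k (hk.trans n.le_succ)]

theorem isCausal_gain {H : (ℕ → ℝ) → ℕ → ℝ} (hH : IsCausal H) :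
    IsCausal fun d => gain (H d) d := fun n d d' h =>
  Finset.sum_congr rfl fun k hk => by
    have hkn := Finset.mem_range.1 hk
    rw [hH k d d' fun i hi => h i (hi.trans hkn.le), h k hkn.le, h (k + 1) hkn]

variable {a b p : ℝ} {d : ℕ → ℝ} {n : ℕ}

theorem hold_mem_Icc (a b : ℝ) (d : ℕ → ℝ) (n : ℕ) : hold a b d n ∈ Set.Icc 0 1 := by
  induction n with
  | zero => rw [hold]; split_ifs <;> simp
  | succ n ih => rw [hold]; split_ifs <;> simp [ih.1, ih.2]

theorem hold_eq_one (h : d n < a) : hold a b d n = 1 := by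
  cases n <;> exact if_pos h

theorem hold_eq_zero (hab : a ≤ b) (h : b < d n) : hold a b d n = 0 := by
  have h' := (hab.trans_lt h).not_gt
  cases n with
  | zero => exact if_neg h'
  | succ n => rw [hold, if_neg h', if_pos h]

/- The increment from time `n` to `n + 1` is `(h n - h (n + 1)) * (d (n + 1) - p)`. -/
theorem monotone_gain_hold_sub (hap : a ≤ p) (hpb : p ≤ b) :
    Monotone fun n => gain (hold a b d) d n - hold a b d n * (d n - p) := by
  refine monotone_nat_of_le_succ fun n => ?_
  have hinc : 0 ≤ (hold a b d n - hold a b d (n + 1)) * (d (n + 1) - p) := by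
    obtain ⟨h0, h1⟩ := hold_mem_Icc a b d n
    obtain ha | ha := lt_or_ge (d (n + 1)) a
    · rw [hold_eq_one ha]
      exact mul_nonneg_of_nonpos_of_nonpos (by linarith) (by linarith)
    obtain hb | hb := lt_or_ge b (d (n + 1))
    · rw [hold_eq_zero (hap.trans hpb) hb]
      exact mul_nonneg (by linarith) (by linarith)
    · rw [hold, if_neg ha.not_gt, if_neg hb.not_gt, sub_self, zero_mul]
  rw [gain, gain, Finset.sum_range_succ]
  linarith

theorem hold_mul_sub_le_gain (hap : a ≤ p) (hpb : p ≤ b) (n : ℕ) :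
    hold a b d n * (d n - p) ≤ gain (hold a b d) d n := by
  have hmono := monotone_gain_hold_sub (d := d) hap hpb n.zero_le
  have h0 : hold a b d 0 * (d 0 - p) ≤ 0 := by
    rw [hold]
    split_ifs <;> linarith
  simp only [gain, Finset.range_zero, Finset.sum_empty] at hmono ⊢
  linarith

theorem neg_one_le_hold_mul_sub (hp : p ≤ 1) (hd : ∀ n, 0 ≤ d n) (n : ℕ) :
    -1 ≤ hold a b d n * (d n - p) := by
  obtain ⟨h0, h1⟩ := hold_mem_Icc a b d n
  nlinarith [hd n]

theorem neg_one_le_gain_hold (hab : a ≤ b) (hb : b ≤ 1) (hd : ∀ n, 0 ≤ d n) (n : ℕ) :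
    -1 ≤ gain (hold a b d) d n :=
  (neg_one_le_hold_mul_sub hb hd n).trans (hold_mul_sub_le_gain hab le_rfl n)

theorem exists_tendsto_hold_of_gain_le {C : ℝ} (hab : a < b) (hb : b ≤ 1) (hd : ∀ n, 0 ≤ d n)
    (hC : ∀ n, gain (hold a b d) d n ≤ C) : ∃ l, Tendsto (hold a b d) atTop (𝓝 l) := by
  have hconv : ∀ p, a ≤ p → p ≤ b →
      ∃ l, Tendsto (fun n => gain (hold a b d) d n - hold a b d n * (d n - p)) atTop (𝓝 l) :=
    fun p hap hpb => by
      refine ⟨_, tendsto_atTop_ciSup (monotone_gain_hold_sub hap hpb) ⟨C + 1, ?_⟩⟩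
      rintro _ ⟨n, rfl⟩
      linarith [hC n, neg_one_le_hold_mul_sub (a := a) (b := b) (hpb.trans hb) hd n]
  obtain ⟨la, hla⟩ := hconv a le_rfl hab.le
  obtain ⟨lb, hlb⟩ := hconv b hab.le le_rfl
  refine ⟨(lb - la) / (b - a), ((hlb.sub hla).div_const (b - a)).congr fun n => ?_⟩
  have hne : b - a ≠ 0 := (sub_pos.2 hab).ne'
  field_simp
  ring

theorem not_frequently_lt_and_frequently_gt_of_tendsto_hold {l : ℝ} (hab : a ≤ b)
    (hl : Tendsto (hold a b d) atTop (𝓝 l)) :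
    ¬ ((∃ᶠ n in atTop, d n < a) ∧ ∃ᶠ n in atTop, b < d n) := fun ⟨ha, hb⟩ => by
  have hl1 : l = 1 := isClosed_singleton.mem_of_frequently_of_tendsto
    (ha.mono fun _ => hold_eq_one) hl
  have hl0 : l = 0 := isClosed_singleton.mem_of_frequently_of_tendsto
    (hb.mono fun _ => hold_eq_zero hab) hl
  exact one_ne_zero (hl1.symm.trans hl0)

end Upcrossings

section Wealth

variable {ι : Type*} {a b c : ι → ℝ} {d : ℕ → ℝ}

/-- The wealth of a trader who holds one unit of a commodity of price `d`, and for each `i` follows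
the strategy `hold (a i) (b i)`, scaled by `c i`, with an initial capital of `c i`. -/
noncomputable def wealth (a b c : ι → ℝ) (d : ℕ → ℝ) (n : ℕ) : ℝ :=
  d n + ∑' i, c i * (1 + gain (hold (a i) (b i) d) d n)

theorem wealth_zero : wealth a b c d 0 = d 0 + ∑' i, c i := by
  simp [wealth, gain]

theorem summable_mul_hold_mul (hc : Summable c) (d : ℕ → ℝ) (k : ℕ) (x : ℝ) :
    Summable fun i => c i * (hold (a i) (b i) d k * x) := by
  refine .of_norm_bounded (hc.abs.mul_right |x|) fun i => ?_
  obtain ⟨h0, h1⟩ := hold_mem_Icc (a i) (b i) d k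
  rw [Real.norm_eq_abs, abs_mul, abs_mul, abs_of_nonneg h0]
  gcongr
  exact mul_le_of_le_one_left (abs_nonneg x) h1

theorem summable_mul_gain (hc : Summable c) (d : ℕ → ℝ) (n : ℕ) :
    Summable fun i => c i * gain (hold (a i) (b i) d) d n := by
  simp only [gain, Finset.mul_sum]
  exact summable_sum fun k _ => summable_mul_hold_mul hc d k _

theorem summable_mul_one_add_gain (hc : Summable c) (d : ℕ → ℝ) (n : ℕ) :
    Summable fun i => c i * (1 + gain (hold (a i) (b i) d) d n) := by
  simp only [mul_add, mul_one]
  exact hc.add (summable_mul_gain hc d n)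

theorem isTransform_wealth (a b : ι → ℝ) (hc : Summable c) : IsTransform (wealth a b c) := by
  refine ⟨fun n d d' h => ?_, fun d n => 1 + ∑' i, c i * hold (a i) (b i) d n,
    fun n d d' h => ?_, fun d n => ?_⟩
  · simp only [wealth, h n le_rfl, isCausal_gain (isCausal_hold _ _) n d d' h]
  · simp only [isCausal_hold _ _ n d d' h]
  · have hgain : ∀ i, c i * (1 + gain (hold (a i) (b i) d) d (n + 1)) =
        c i * (1 + gain (hold (a i) (b i) d) d n) +
          c i * (hold (a i) (b i) d n * (d (n + 1) - d n)) := fun i => by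
      rw [gain, gain, Finset.sum_range_succ]
      ring
    simp only [wealth, hgain]
    rw [(summable_mul_one_add_gain hc d n).tsum_add (summable_mul_hold_mul hc d n _)]
    simp only [← mul_assoc]
    rw [tsum_mul_right]
    ring

theorem mul_one_add_gain_nonneg (hab : ∀ i, a i ≤ b i) (hb : ∀ i, b i ≤ 1) (hc : ∀ i, 0 ≤ c i)
    (hd : ∀ n, 0 ≤ d n) (i : ι) (n : ℕ) :
    0 ≤ c i * (1 + gain (hold (a i) (b i) d) d n) :=
  mul_nonneg (hc i) (by linarith [neg_one_le_gain_hold (hab i) (hb i) hd n])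

theorem le_wealth (hab : ∀ i, a i ≤ b i) (hb : ∀ i, b i ≤ 1) (hc : ∀ i, 0 ≤ c i)
    (hd : ∀ n, 0 ≤ d n) (n : ℕ) : d n ≤ wealth a b c d n :=
  le_add_of_nonneg_right (tsum_nonneg fun i => mul_one_add_gain_nonneg hab hb hc hd i n)

theorem mul_one_add_gain_le_wealth (hab : ∀ i, a i ≤ b i) (hb : ∀ i, b i ≤ 1)
    (hc : ∀ i, 0 ≤ c i) (hcs : Summable c) (hd : ∀ n, 0 ≤ d n) (i : ι) (n : ℕ) :
    c i * (1 + gain (hold (a i) (b i) d) d n) ≤ wealth a b c d n :=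
  ((summable_mul_one_add_gain hcs d n).le_tsum i fun j _ =>
    mul_one_add_gain_nonneg hab hb hc hd j n).trans (le_add_of_nonneg_left (hd n))

theorem abs_mul_hold_mul_sub_le (ha : ∀ i, 0 ≤ a i) (hab : ∀ i, a i ≤ b i) (hb : ∀ i, b i ≤ 1)
    (hc : ∀ i, 0 ≤ c i) (hd : ∀ n, d n ∈ Set.Icc 0 1) (i : ι) (n : ℕ) :
    |c i * (hold (a i) (b i) d n * (d n - a i))| ≤ c i := by
  obtain ⟨h0, h1⟩ := hold_mem_Icc (a i) (b i) d n
  obtain ⟨hd0, hd1⟩ := hd n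
  have hle : |d n - a i| ≤ 1 :=
    abs_le.2 ⟨by linarith [hab i, hb i], by linarith [ha i]⟩
  rw [abs_mul, abs_mul, abs_of_nonneg (hc i), abs_of_nonneg h0]
  exact mul_le_of_le_one_right (hc i) (mul_le_one₀ h1 (abs_nonneg _) hle)

theorem exists_tendsto_of_wealth_le {C : ℝ} (hab : ∀ i, a i < b i) (hb : ∀ i, b i ≤ 1)
    (hc : ∀ i, 0 < c i) (hcs : Summable c) (hd : ∀ n, d n ∈ Set.Icc 0 1)
    (hlevels : ∀ x y : ℚ, (0 : ℝ) ≤ x → (x : ℝ) < y → (y : ℝ) ≤ 1 → ∃ i, a i = x ∧ b i = y)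
    (hC : ∀ n, wealth a b c d n ≤ C) :
    (∀ i, ∃ l, Tendsto (hold (a i) (b i) d) atTop (𝓝 l)) ∧ ∃ l, Tendsto d atTop (𝓝 l) := by
  have hd0 : ∀ n, 0 ≤ d n := fun n => (hd n).1
  have hhold : ∀ i, ∃ l, Tendsto (hold (a i) (b i) d) atTop (𝓝 l) := fun i => by
    refine exists_tendsto_hold_of_gain_le (C := C / c i) (hab i) (hb i) hd0 fun n => ?_
    have hle := (mul_one_add_gain_le_wealth (fun i => (hab i).le) hb (fun i => (hc i).le) hcs
      hd0 i n).trans (hC n)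
    rw [le_div_iff₀ (hc i)]
    linarith [hc i]
  refine ⟨hhold, tendsto_of_no_upcrossings Rat.denseRange_cast ?_
    (isBoundedUnder_of ⟨1, fun n => (hd n).2⟩) (isBoundedUnder_of ⟨0, hd0⟩)⟩
  rintro _ ⟨x, rfl⟩ _ ⟨y, rfl⟩ hxy hcross
  obtain ⟨n, hn⟩ := hcross.1.exists
  obtain ⟨m, hm⟩ := hcross.2.exists
  obtain ⟨i, hi, hi'⟩ := hlevels x y ((hd0 n).trans hn.le) hxy (hm.le.trans (hd m).2)
  obtain ⟨l, hl⟩ := hhold i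
  rw [← hi, ← hi'] at hcross
  exact not_frequently_lt_and_frequently_gt_of_tendsto_hold (hab i).le hl hcross

/- Splitting off the value of the units currently held leaves a monotone process. -/
theorem exists_tendsto_wealth {C : ℝ} (ha : ∀ i, 0 ≤ a i) (hab : ∀ i, a i ≤ b i)
    (hb : ∀ i, b i ≤ 1) (hc : ∀ i, 0 ≤ c i) (hcs : Summable c) (hd : ∀ n, d n ∈ Set.Icc 0 1)
    (hhold : ∀ i, ∃ l, Tendsto (hold (a i) (b i) d) atTop (𝓝 l))
    (hlim : ∃ l, Tendsto d atTop (𝓝 l)) (hC : ∀ n, wealth a b c d n ≤ C) :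
    ∃ l, Tendsto (wealth a b c d) atTop (𝓝 l) := by
  let V (i : ι) (n : ℕ) : ℝ := hold (a i) (b i) d n * (d n - a i)
  let R (n : ℕ) : ℝ := ∑' i, c i * (1 + (gain (hold (a i) (b i) d) d n - V i n))
  have hV : ∀ i n, |c i * V i n| ≤ c i := abs_mul_hold_mul_sub_le ha hab hb hc hd
  have hVs : ∀ n, Summable fun i => c i * V i n := fun n => .of_norm_bounded hcs fun i => hV i n
  have hsplit : ∀ i n, c i * (1 + (gain (hold (a i) (b i) d) d n - V i n)) =
      c i * (1 + gain (hold (a i) (b i) d) d n) - c i * V i n := fun i n => by ring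
  have hRs : ∀ n, Summable fun i => c i * (1 + (gain (hold (a i) (b i) d) d n - V i n)) :=
    fun n => by simpa only [hsplit] using (summable_mul_one_add_gain hcs d n).sub (hVs n)
  have hwealth : ∀ n, wealth a b c d n = d n + R n + ∑' i, c i * V i n := fun n => by
    simp only [R, wealth, hsplit]
    rw [(summable_mul_one_add_gain hcs d n).tsum_sub (hVs n)]
    ring
  have hRmono : Monotone R := fun m n hmn => (hRs m).tsum_le_tsum (fun i =>
    mul_le_mul_of_nonneg_left (by linarith [monotone_gain_hold_sub (d := d) le_rfl (hab i) hmn])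
      (hc i)) (hRs n)
  have hRbdd : ∀ n, R n ≤ C + ∑' i, c i := fun n => by
    have hle : -∑' i, c i ≤ ∑' i, c i * V i n := by
      rw [← tsum_neg]
      exact hcs.neg.tsum_le_tsum (fun i => neg_le_of_abs_le (hV i n)) (hVs n)
    linarith [hC n, (hd n).1, hwealth n]
  obtain ⟨l, hl⟩ := hlim
  choose h hh using hhold
  have hVlim : Tendsto (fun n => ∑' i, c i * V i n) atTop (𝓝 (∑' i, c i * (h i * (l - a i)))) :=
    tendsto_tsum_of_dominated_convergence hcs
      (fun i => ((hh i).mul (hl.sub_const (a i))).const_mul (c i)) (.of_forall fun n i => hV i n)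
  rw [funext hwealth]
  exact ⟨_, (hl.add (tendsto_atTop_ciSup hRmono ⟨_, Set.forall_mem_range.2 hRbdd⟩)).add hVlim⟩

/- A martingale with values in `[0, 1]` need not converge everywhere. Betting also on all its
upcrossings, and stopping once the wealth reaches `1`, repairs this. -/
theorem exists_isTransform_tendsto {ε : ℝ} (hε : 0 < ε) :
    ∃ Φ, IsTransform Φ ∧ ∀ d : ℕ → ℝ, (∀ n, d n ∈ Set.Icc 0 1) →
      Φ d 0 ≤ d 0 + ε ∧ (∀ n, 0 ≤ Φ d n) ∧ (∃ l, Tendsto (Φ d) atTop (𝓝 l)) ∧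
        ((∃ n, d n = 1) → ∀ᶠ n in atTop, 1 ≤ Φ d n) := by
  let ι := {q : ℚ × ℚ // (0 : ℝ) ≤ q.1 ∧ (q.1 : ℝ) < q.2 ∧ (q.2 : ℝ) ≤ 1}
  let a (i : ι) : ℝ := i.1.1
  let b (i : ι) : ℝ := i.1.2
  have ha : ∀ i, 0 ≤ a i := fun i => i.2.1
  have hab : ∀ i, a i < b i := fun i => i.2.2.1
  have hb : ∀ i, b i ≤ 1 := fun i => i.2.2.2
  obtain ⟨c, hc, S, hS, hSε⟩ := posSumOfEncodable hε ι
  have hc0 : ∀ i, 0 ≤ c i := fun i => (hc i).le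
  refine ⟨fun d => stopped 1 (wealth a b c d), (isTransform_wealth a b hS.summable).stopped_comp 1,
    fun d hd => ?_⟩
  have hle : ∀ n, d n ≤ wealth a b c d n :=
    le_wealth (fun i => (hab i).le) hb hc0 fun n => (hd n).1
  refine ⟨?_, fun n => ?_, exists_tendsto_stopped fun hlt => ?_, fun ⟨n, hn⟩ => ?_⟩
  · simp only [stopped, wealth_zero, hS.tsum_eq]
    gcongr
  · obtain ⟨k, hk⟩ := exists_stopped_eq 1 (wealth a b c d) n
    exact ((hd k).1.trans (hle k)).trans hk.ge
  · obtain ⟨hhold, hlim⟩ := exists_tendsto_of_wealth_le hab hb hc hS.summable hd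
      (fun x y hx hxy hy => ⟨⟨(x, y), hx, hxy, hy⟩, rfl, rfl⟩) fun n => (hlt n).le
    exact exists_tendsto_wealth ha (fun i => (hab i).le) hb hc0 hS.summable hd hhold hlim
      fun n => (hlt n).le
  · obtain ⟨v, hv, hev⟩ := exists_eventually_stopped_eq (hn.ge.trans (hle n))
    exact hev.mono fun k hk => hv.trans hk.ge

end Wealth

section NullSets

variable {μ : Measure (ℕ → Bool)}

/-- The proportion of the cylinder `cyl s` that lies in `O`, when `μ` is the coin-flipping
measure. -/
noncomputable def density (μ : Measure (ℕ → Bool)) (O : Set (ℕ → Bool)) (s : List Bool) : ℝ :=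
  μ.real (O ∩ cyl s) * 2 ^ s.length

theorem isProbabilityMeasure_of_measure_cyl
    (hμ : ∀ s : List Bool, μ (cyl s) = (1 / 2 : ℝ≥0∞) ^ s.length) : IsProbabilityMeasure μ :=
  ⟨by simpa [cyl] using hμ []⟩

theorem isFair_density [IsFiniteMeasure μ] (O : Set (ℕ → Bool)) :
    IsFair (density μ O) := fun s => by
  have hsplit := measureReal_inter_add_sdiff (μ := μ) (s := O ∩ cyl s)
    (isClopen_cyl (s ++ [false])).isOpen.measurableSet
  have hfalse : O ∩ cyl s ∩ cyl (s ++ [false]) = O ∩ cyl (s ++ [false]) := by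
    rw [cyl_append_singleton, ← Set.inter_assoc, Set.inter_assoc O, Set.inter_self,
      Set.inter_assoc]
  have htrue : (O ∩ cyl s) \ cyl (s ++ [false]) = O ∩ cyl (s ++ [true]) := by
    rw [cyl_append_singleton, cyl_append_singleton]
    ext β
    cases h : β s.length <;> simp [h]
  rw [hfalse, htrue] at hsplit
  simp only [density, List.length_append, List.length_singleton, ← hsplit, pow_succ]
  ring

theorem density_mem_Icc (hμ : ∀ s : List Bool, μ (cyl s) = (1 / 2 : ℝ≥0∞) ^ s.length)
    (O : Set (ℕ → Bool)) (s : List Bool) : density μ O s ∈ Set.Icc 0 1 := by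
  have := isProbabilityMeasure_of_measure_cyl hμ
  have hcyl : μ.real (cyl s) * 2 ^ s.length = 1 := by simp [measureReal_def, hμ]
  refine ⟨mul_nonneg measureReal_nonneg (by positivity), hcyl ▸ ?_⟩
  exact mul_le_mul_of_nonneg_right (measureReal_mono Set.inter_subset_right) (by positivity)

theorem density_eq_one (hμ : ∀ s : List Bool, μ (cyl s) = (1 / 2 : ℝ≥0∞) ^ s.length)
    {O : Set (ℕ → Bool)} {s : List Bool} (hs : cyl s ⊆ O) : density μ O s = 1 := by
  simp [density, Set.inter_eq_right.2 hs, measureReal_def, hμ]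

theorem eventually_density_eq_one (hμ : ∀ s : List Bool, μ (cyl s) = (1 / 2 : ℝ≥0∞) ^ s.length)
    {O : Set (ℕ → Bool)} (hO : IsOpen O) {β : ℕ → Bool} (hβ : β ∈ O) :
    ∀ᶠ n in atTop, density μ O (seg β n) = 1 := by
  obtain ⟨_, ⟨γ, n, rfl⟩, hβn, hn⟩ :=
    (PiNat.isTopologicalBasis_cylinders fun _ : ℕ => Bool).exists_subset_of_mem_open hβ hO
  filter_upwards [eventually_ge_atTop n] with m hm
  refine density_eq_one hμ ?_
  rw [cyl_seg]
  exact (PiNat.cylinder_anti β hm).trans ((PiNat.mem_cylinder_iff_eq.1 hβn).subset.trans hn)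

theorem exists_isFair_tendsto_of_measure_eq_zero
    (hμ : ∀ s : List Bool, μ (cyl s) = (1 / 2 : ℝ≥0∞) ^ s.length) {Z : Set (ℕ → Bool)}
    (hZ : μ Z = 0) {ε : ℝ} (hε : 0 < ε) :
    ∃ m : List Bool → ℝ, IsFair m ∧ (∀ s, 0 ≤ m s) ∧ m [] ≤ ε ∧
      (∀ β, ∃ l, Tendsto (fun n => m (seg β n)) atTop (𝓝 l)) ∧
      ∀ β ∈ Z, ∀ᶠ n in atTop, 1 ≤ m (seg β n) := by
  have := isProbabilityMeasure_of_measure_cyl hμ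
  obtain ⟨O, hZO, hO, hμO⟩ := Z.exists_isOpen_lt_of_lt (μ := μ) (ENNReal.ofReal (ε / 2))
    (by rw [hZ]; exact ENNReal.ofReal_pos.2 (half_pos hε))
  have hroot : density μ O [] ≤ ε / 2 := by
    simpa [density, cyl, measureReal_def] using
      ENNReal.toReal_le_of_le_ofReal (half_pos hε).le hμO.le
  obtain ⟨Φ, hΦ, hbet⟩ := exists_isTransform_tendsto (half_pos hε)
  have hpath := hΦ.isCausal.pathwise_seg (density μ O)
  have hdens : ∀ s, density μ O s ∈ Set.Icc 0 1 := density_mem_Icc hμ O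
  refine ⟨pathwise Φ (density μ O), (isFair_density O).pathwise_of_isTransform hΦ,
    fun s => (hbet _ fun n => hdens _).2.1 s.length, ?_, fun β => ?_, fun β hβ => ?_⟩
  · exact ((hbet _ fun n => hdens ([].take n)).1).trans (by simpa using by linarith)
  · simp only [hpath]
    exact (hbet _ fun n => hdens (seg β n)).2.2.1
  · simp only [hpath]
    exact (hbet _ fun n => hdens (seg β n)).2.2.2
      (eventually_density_eq_one hμ hO (hZO hβ)).exists

theorem exists_forall_isFair_tendsto_of_measure_eq_zero
    (hμ : ∀ s : List Bool, μ (cyl s) = (1 / 2 : ℝ≥0∞) ^ s.length) {Z : Set (ℕ → Bool)}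
    (hZ : μ Z = 0) :
    ∃ m : List Bool → List Bool → ℝ, (∀ r, IsFair (m r)) ∧ (∀ r s, 0 ≤ m r s) ∧
      (∀ r, m r r ≤ (1 / 2) ^ (r.length + 2)) ∧
      (∀ r β, ∃ l, Tendsto (fun n => m r (seg β n)) atTop (𝓝 l)) ∧
      ∀ r, ∀ β ∈ Z, ∀ᶠ n in atTop, 1 ≤ m r (seg β n) := by
  choose m hfair hm0 hroot hlim hwin using fun r : List Bool =>
    exists_isFair_tendsto_of_measure_eq_zero hμ hZ
      (show (0 : ℝ) < (1 / 2) ^ (r.length + 2) / 2 ^ r.length by positivity)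
  refine ⟨m, hfair, hm0, fun r => ?_, hlim, hwin⟩
  calc m r r ≤ 2 ^ r.length * m r [] := (hfair r).le_two_pow_mul (hm0 r) r
    _ ≤ 2 ^ r.length * ((1 / 2) ^ (r.length + 2) / 2 ^ r.length) := by
        gcongr
        exact hroot r
    _ = (1 / 2) ^ (r.length + 2) := mul_div_cancel₀ _ (by positivity)

end NullSets

section Betting

/-- The wealth at `s` of a gambler with initial wealth `1` who, on reaching a position `r` in `A`,
buys one share of `m r`. -/
noncomputable def bet (m : List Bool → List Bool → ℝ) (A : Set (List Bool)) (s : List Bool) : ℝ :=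
  open Classical in 1 + ∑ k ∈ Finset.range (s.length + 1),
    if s.take k ∈ A then m (s.take k) s - m (s.take k) (s.take k) else 0

variable {m : List Bool → List Bool → ℝ} {A : Set (List Bool)} {β : ℕ → Bool}

theorem measurable_bet {X : Type*} [MeasurableSpace X] {A : X → Set (List Bool)}
    (hA : ∀ s, MeasurableSet {x | s ∈ A x}) (m : List Bool → List Bool → ℝ) (s : List Bool) :
    Measurable fun x => bet m (A x) s :=
  (Finset.measurable_sum _ fun _ _ =>
    Measurable.ite (hA _) measurable_const measurable_const).const_add 1

open Classical in
theorem bet_seg (m : List Bool → List Bool → ℝ) (A : Set (List Bool)) (β : ℕ → Bool) (n : ℕ) :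
    bet m A (seg β n) = 1 + ∑ k ∈ Finset.range (n + 1),
      if seg β k ∈ A then m (seg β k) (seg β n) - m (seg β k) (seg β k) else 0 := by
  rw [bet, length_seg]
  congr! 2 with k hk
  rw [take_seg β (Nat.lt_succ_iff.1 (Finset.mem_range.1 hk))]

theorem isFair_bet (hm : ∀ r, IsFair (m r)) (A : Set (List Bool)) : IsFair (bet m A) := fun s => by
  classical
  have hsucc : ∀ b, bet m A (s ++ [b]) = 1 + ∑ k ∈ Finset.range (s.length + 1),
      if s.take k ∈ A then m (s.take k) (s ++ [b]) - m (s.take k) (s.take k) else 0 := fun b => by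
    rw [bet, List.length_append, List.length_singleton, Finset.sum_range_succ,
      List.take_of_length_le (by simp), sub_self, ite_self, add_zero]
    congr! 2 with k hk
    rw [List.take_append_of_le_length (Nat.lt_succ_iff.1 (Finset.mem_range.1 hk))]
  rw [hsucc, hsucc, add_add_add_comm, ← Finset.sum_add_distrib, add_div, Finset.sum_div, bet]
  congr! 2 with k
  · norm_num
  · split_ifs
    · rw [hm (s.take k) s]
      ring
    · ring

/- The shares cost at most `1 / 4 + 1 / 8 + ⋯ = 1 / 2` in all. -/
open Classical in
theorem half_add_sum_le_bet (hmr : ∀ r, m r r ≤ (1 / 2) ^ (r.length + 2)) (A : Set (List Bool))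
    (s : List Bool) :
    1 / 2 + ∑ k ∈ Finset.range (s.length + 1), (if s.take k ∈ A then m (s.take k) s else 0) ≤
      bet m A s := by
  have hcost : ∀ k ∈ Finset.range (s.length + 1),
      (if s.take k ∈ A then m (s.take k) s else 0) - (1 / 2) ^ k * (1 / 4) ≤
        if s.take k ∈ A then m (s.take k) s - m (s.take k) (s.take k) else 0 := fun k hk => by
    have hr := hmr (s.take k)
    rw [List.length_take_of_le (Nat.lt_succ_iff.1 (Finset.mem_range.1 hk)), pow_add] at hr
    split_ifs
    · linarith
    · simp
  have hsum := Finset.sum_le_sum hcost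
  rw [Finset.sum_sub_distrib, ← Finset.sum_mul] at hsum
  rw [bet]
  linarith [sum_geometric_two_le (s.length + 1)]

theorem half_le_bet (hm0 : ∀ r s, 0 ≤ m r s) (hmr : ∀ r, m r r ≤ (1 / 2) ^ (r.length + 2))
    (A : Set (List Bool)) (s : List Bool) : 1 / 2 ≤ bet m A s := by
  classical
  refine le_trans (le_add_of_nonneg_right (Finset.sum_nonneg fun k _ => ?_))
    (half_add_sum_le_bet hmr A s)
  split_ifs
  exacts [hm0 _ _, le_rfl]

theorem exists_tendsto_bet (hlim : ∀ r, ∃ l, Tendsto (fun n => m r (seg β n)) atTop (𝓝 l))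
    (hβ : ¬ ∃ᶠ n in atTop, seg β n ∈ A) :
    ∃ l, Tendsto (fun n => bet m A (seg β n)) atTop (𝓝 l) := by
  classical
  obtain ⟨N, hN⟩ := eventually_atTop.1 (not_frequently.1 hβ)
  choose l hl using hlim
  have hterm : ∀ k, Tendsto
      (fun n => if seg β k ∈ A then m (seg β k) (seg β n) - m (seg β k) (seg β k) else 0) atTop
      (𝓝 (if seg β k ∈ A then l (seg β k) - m (seg β k) (seg β k) else 0)) := fun k => by
    split_ifs
    exacts [(hl _).sub_const _, tendsto_const_nhds]
  refine ⟨_, ((tendsto_finsetSum (Finset.range N) fun k _ => hterm k).const_add 1).congr' ?_⟩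
  filter_upwards [eventually_ge_atTop N] with n hn
  rw [bet_seg]
  congr 1
  refine Finset.sum_subset (Finset.range_mono (hn.trans n.le_succ)) fun k _ hk => ?_
  exact if_neg (hN k (not_lt.1 (mt Finset.mem_range.2 hk)))

theorem tendsto_bet_atTop (hm0 : ∀ r s, 0 ≤ m r s) (hmr : ∀ r, m r r ≤ (1 / 2) ^ (r.length + 2))
    (hwin : ∀ r, ∀ᶠ n in atTop, 1 ≤ m r (seg β n)) (hβ : ∃ᶠ n in atTop, seg β n ∈ A) :
    Tendsto (fun n => bet m A (seg β n)) atTop atTop := by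
  classical
  refine tendsto_atTop.2 fun C => ?_
  obtain ⟨T, hTA, hT⟩ := (Nat.frequently_atTop_iff_infinite.1 hβ).exists_subset_card_eq ⌈C⌉₊
  have hwinT : ∀ᶠ n in atTop, ∀ k ∈ T, k ≤ n ∧ 1 ≤ m (seg β k) (seg β n) :=
    (Finset.eventually_all T).2 fun k _ => (eventually_ge_atTop k).and (hwin _)
  filter_upwards [hwinT] with n hn
  have hterm : ∀ k ∈ T,
      1 ≤ if (seg β n).take k ∈ A then m ((seg β n).take k) (seg β n) else 0 := fun k hk => by
    rw [take_seg β (hn k hk).1, if_pos (show seg β k ∈ A from hTA hk)]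
    exact (hn k hk).2
  calc C ≤ ⌈C⌉₊ := Nat.le_ceil C
    _ = ∑ _k ∈ T, (1 : ℝ) := by rw [← hT, Finset.sum_const, nsmul_one]
    _ ≤ ∑ k ∈ Finset.range ((seg β n).length + 1),
          if (seg β n).take k ∈ A then m ((seg β n).take k) (seg β n) else 0 := by
        refine (Finset.sum_le_sum hterm).trans (Finset.sum_le_sum_of_subset_of_nonneg
          (fun k hk => ?_) fun k _ _ => ?_)
        · simpa [Nat.lt_succ_iff] using (hn k hk).1
        · split_ifs
          exacts [hm0 _ _, le_rfl]
    _ ≤ bet m A (seg β n) := by linarith [half_add_sum_le_bet hmr A (seg β n)]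

end Betting

section Oscillation

/-- The last term of `d` up to time `n` that is at least twice the previous such term, the first
of them being `d 0`. -/
noncomputable def record (d : ℕ → ℝ) : ℕ → ℝ
  | 0 => d 0
  | n + 1 => if 2 * record d n ≤ d (n + 1) then d (n + 1) else record d n

/-- Which of the directions `1` and `-1` points from `v` towards the middle of `[0, 1]`. -/
noncomputable def inward (v : ℝ) : ℝ := if v ≤ 1 / 2 then 1 else -1

/-- The point reached from `v` by moving `inward v` by an eighth of the growth of a ratio from `1`
to `x`. -/
noncomputable def swing (v x : ℝ) : ℝ := v + inward v / 8 * (x - 1)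

/-- The value of `oscillate d` when the current `record d n` was set. -/
noncomputable def anchor (d : ℕ → ℝ) : ℕ → ℝ
  | 0 => 1 / 2
  | n + 1 => if 2 * record d n ≤ d (n + 1) then swing (anchor d n) (d (n + 1) / record d n)
      else anchor d n

/-- A transform of `d` that reverses its direction each time `d` has doubled. -/
noncomputable def oscillate (d : ℕ → ℝ) (n : ℕ) : ℝ :=
  1 / 2 + gain (fun k => inward (anchor d k) / (8 * record d k)) d n

theorem isCausal_record : IsCausal record := fun n => by
  induction n with
  | zero => exact fun d d' h => h 0 le_rfl
  | succ n ih =>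
    exact fun d d' h => by
      simp only [record, h (n + 1) le_rfl, ih d d' fun k hk => h k (hk.trans n.le_succ)]

theorem isCausal_anchor : IsCausal anchor := fun n => by
  induction n with
  | zero => exact fun _ _ _ => rfl
  | succ n ih =>
    intro d d' h
    have hn : ∀ k ≤ n, d k = d' k := fun k hk => h k (hk.trans n.le_succ)
    simp only [anchor, h (n + 1) le_rfl, ih d d' hn, isCausal_record n d d' hn]

theorem isTransform_oscillate : IsTransform oscillate := by
  have hcausal : IsCausal fun d k => inward (anchor d k) / (8 * record d k) :=
    fun n d d' h => by simp only [isCausal_anchor n d d' h, isCausal_record n d d' h]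
  refine ⟨fun n d d' h => congrArg (1 / 2 + ·) (isCausal_gain hcausal n d d' h),
    _, hcausal, fun d n => ?_⟩
  rw [oscillate, oscillate, gain, gain, Finset.sum_range_succ, add_assoc]

theorem measurable_inward : Measurable inward :=
  Measurable.ite measurableSet_Iic measurable_const measurable_const

theorem measurable_record (n : ℕ) : Measurable fun d => record d n := by
  induction n with
  | zero => exact measurable_pi_apply 0
  | succ n ih =>
    exact Measurable.ite (measurableSet_le (ih.const_mul 2) (measurable_pi_apply _))
      (measurable_pi_apply _) ih

theorem measurable_anchor (n : ℕ) : Measurable fun d => anchor d n := by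
  induction n with
  | zero => exact measurable_const
  | succ n ih =>
    have hrec := measurable_record n
    refine Measurable.ite (measurableSet_le (hrec.const_mul 2) (measurable_pi_apply _)) ?_ ih
    exact ih.add (((measurable_inward.comp ih).div_const 8).mul
      (((measurable_pi_apply _).div hrec).sub_const 1))

theorem measurable_oscillate (n : ℕ) : Measurable fun d => oscillate d n :=
  (Finset.measurable_sum _ fun k _ => ((measurable_inward.comp (measurable_anchor k)).div
    ((measurable_record k).const_mul 8)).mul
      ((measurable_pi_apply (k + 1)).sub (measurable_pi_apply k))).const_add _

variable {v x : ℝ} {d : ℕ → ℝ} {n : ℕ}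

theorem swing_one (v : ℝ) : swing v 1 = v := by simp [swing]

theorem swing_mem_Icc (hv : v ∈ Set.Icc (1 / 8) (7 / 8)) (hx : x ∈ Set.Icc 0 4) :
    swing v x ∈ Set.Icc 0 1 := by
  obtain ⟨hv0, hv1⟩ := hv
  obtain ⟨hx0, hx1⟩ := hx
  rw [swing, inward]
  split_ifs <;> constructor <;> linarith

theorem swing_mem_Icc_of_two_le (hv : v ∈ Set.Icc (1 / 8) (7 / 8)) (hx : x ∈ Set.Icc 2 4) :
    swing v x ∈ Set.Icc (1 / 8) (7 / 8) := by
  obtain ⟨hv0, hv1⟩ := hv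
  obtain ⟨hx0, hx1⟩ := hx
  rw [swing, inward]
  split_ifs <;> constructor <;> linarith

theorem le_abs_swing_sub (hx : 2 ≤ x) : 1 / 8 ≤ |swing v x - v| := by
  rw [swing, inward]
  split_ifs
  · exact le_abs.2 (.inl (by linarith))
  · exact le_abs.2 (.inr (by linarith))

theorem continuous_swing (v : ℝ) : Continuous (swing v) := by
  unfold swing
  fun_prop

theorem record_pos (hd : ∀ n, 0 < d n) (n : ℕ) : 0 < record d n := by
  induction n with
  | zero => exact hd 0
  | succ n ih =>
    rw [record]
    split_ifs
    exacts [hd _, ih]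

theorem lt_two_mul_record (hd : ∀ n, 0 < d n) (n : ℕ) : d n < 2 * record d n := by
  cases n with
  | zero => rw [record]; linarith [hd 0]
  | succ n =>
    rw [record]
    split_ifs with h
    · linarith [hd (n + 1)]
    · exact not_le.1 h

theorem monotone_record (hd : ∀ n, 0 < d n) : Monotone (record d) :=
  monotone_nat_of_le_succ fun n => by
    rw [record]
    split_ifs with h
    · linarith [record_pos hd n]
    · rfl

theorem exists_record_eq (d : ℕ → ℝ) (n : ℕ) : ∃ k, record d n = d k := by
  induction n with
  | zero => exact ⟨0, rfl⟩
  | succ n ih =>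
    rw [record]
    split_ifs
    exacts [⟨_, rfl⟩, ih]

theorem div_record_mem_Icc (hd : ∀ n, 0 < d n) (hd2 : ∀ n, d (n + 1) ≤ 2 * d n)
    (h : 2 * record d n ≤ d (n + 1)) : d (n + 1) / record d n ∈ Set.Icc 2 4 := by
  have hpos := record_pos hd n
  rw [Set.mem_Icc, le_div_iff₀ hpos, div_le_iff₀ hpos]
  exact ⟨h, by linarith [lt_two_mul_record hd n, hd2 n]⟩

theorem anchor_mem_Icc (hd : ∀ n, 0 < d n) (hd2 : ∀ n, d (n + 1) ≤ 2 * d n) (n : ℕ) :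
    anchor d n ∈ Set.Icc (1 / 8) (7 / 8) := by
  induction n with
  | zero => rw [anchor]; norm_num
  | succ n ih =>
    rw [anchor]
    split_ifs with h
    exacts [swing_mem_Icc_of_two_le ih (div_record_mem_Icc hd hd2 h), ih]

theorem oscillate_eq_swing (hd : ∀ n, 0 < d n) (n : ℕ) :
    oscillate d n = swing (anchor d n) (d n / record d n) := by
  induction n with
  | zero => simp [oscillate, gain, anchor, record, div_self (hd 0).ne', swing_one]
  | succ n ih =>
    have hstep : oscillate d (n + 1) = swing (anchor d n) (d (n + 1) / record d n) := by
      rw [oscillate, gain, Finset.sum_range_succ, ← gain, ← add_assoc, ← oscillate, ih, swing,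
        swing]
      have hne := (record_pos hd n).ne'
      field_simp
      ring
    rw [hstep, anchor, record]
    split_ifs
    · rw [div_self (hd _).ne', swing_one]
    · rfl

theorem oscillate_eq_anchor (hd : ∀ n, 0 < d n) (h : 2 * record d n ≤ d (n + 1)) :
    oscillate d (n + 1) = anchor d (n + 1) := by
  rw [oscillate_eq_swing hd, record, if_pos h, div_self (hd _).ne', swing_one]

theorem oscillate_mem_Icc (hd : ∀ n, 0 < d n) (hd2 : ∀ n, d (n + 1) ≤ 2 * d n) (n : ℕ) :
    oscillate d n ∈ Set.Icc 0 1 := by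
  rw [oscillate_eq_swing hd]
  have hpos := record_pos hd n
  refine swing_mem_Icc (anchor_mem_Icc hd hd2 n) ⟨div_nonneg (hd n).le hpos.le, ?_⟩
  rw [div_le_iff₀ hpos]
  linarith [lt_two_mul_record hd n]

theorem frequently_two_mul_record_le (hd : ∀ n, 0 < d n) (htop : Tendsto d atTop atTop) :
    ∃ᶠ n in atTop, 2 * record d n ≤ d (n + 1) := fun h => by
  obtain ⟨N, hN⟩ := eventually_atTop.1 h
  obtain ⟨v, hv⟩ := eventuallyConst_iff_exists_eventuallyEq.1
    (eventuallyConst_atTop_nat.2 ⟨N, fun n hn => show record d (n + 1) = _ from if_neg (hN n hn)⟩)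
  obtain ⟨n, hn, hvn⟩ := ((htop.eventually_ge_atTop (2 * v)).and hv).exists
  linarith [lt_two_mul_record hd n, show record d n = v from hvn]

theorem eventually_not_two_mul_record_le {l : ℝ} (hd : ∀ n, 0 < d n)
    (hl : Tendsto d atTop (𝓝 l)) : ∀ᶠ n in atTop, ¬ 2 * record d n ≤ d (n + 1) := by
  obtain ⟨C, hC⟩ := hl.bddAbove_range
  have hconv : Tendsto (record d) atTop (𝓝 (⨆ n, record d n)) := by
    refine tendsto_atTop_ciSup (monotone_record hd) ⟨C, Set.forall_mem_range.2 fun n => ?_⟩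
    obtain ⟨k, hk⟩ := exists_record_eq d n
    exact hk ▸ hC (Set.mem_range_self k)
  have hdiff : Tendsto (fun n => record d (n + 1) - record d n) atTop (𝓝 0) := by
    simpa using (hconv.comp (tendsto_add_atTop_nat 1)).sub hconv
  filter_upwards [hdiff.eventually_lt_const (hd 0)] with n hn h
  rw [record, if_pos h] at hn
  linarith [monotone_record hd n.zero_le, show record d 0 = d 0 from rfl]

theorem exists_tendsto_oscillate {l : ℝ} (hd : ∀ n, 0 < d n) (hl : Tendsto d atTop (𝓝 l)) :
    ∃ l, Tendsto (oscillate d) atTop (𝓝 l) := by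
  obtain ⟨N, hN⟩ := eventually_atTop.1 (eventually_not_two_mul_record_le hd hl)
  obtain ⟨r, hr⟩ := eventuallyConst_iff_exists_eventuallyEq.1
    (eventuallyConst_atTop_nat.2 ⟨N, fun n hn => show record d (n + 1) = _ from if_neg (hN n hn)⟩)
  obtain ⟨v, hv⟩ := eventuallyConst_iff_exists_eventuallyEq.1
    (eventuallyConst_atTop_nat.2 ⟨N, fun n hn => show anchor d (n + 1) = _ from if_neg (hN n hn)⟩)
  refine ⟨_, (((continuous_swing v).tendsto _).comp (hl.div_const r)).congr' ?_⟩
  filter_upwards [hr, hv] with n hrn hvn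
  rw [oscillate_eq_swing hd, hrn, hvn, Function.comp_apply]

theorem not_tendsto_oscillate (hd : ∀ n, 0 < d n) (hd2 : ∀ n, d (n + 1) ≤ 2 * d n)
    (htop : Tendsto d atTop atTop) (l : ℝ) : ¬ Tendsto (oscillate d) atTop (𝓝 l) := fun hl => by
  have hflip := frequently_two_mul_record_le hd htop
  obtain ⟨N, hN⟩ := Metric.tendsto_atTop.1 hl (1 / 16) (by norm_num)
  obtain ⟨p, hp, hpN⟩ := (hflip.and_eventually (eventually_ge_atTop N)).exists
  have hanchor : ∀ n ≥ p + 1, dist (anchor d n) l < 1 / 16 := fun n hn => by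
    induction n, hn using Nat.le_induction with
    | base => exact oscillate_eq_anchor hd hp ▸ hN _ (hpN.trans p.le_succ)
    | succ n hn ih =>
      by_cases h : 2 * record d n ≤ d (n + 1)
      · exact oscillate_eq_anchor hd h ▸ hN _ (by lia)
      · rwa [anchor, if_neg h]
  obtain ⟨q, hq, hqp⟩ := (hflip.and_eventually (eventually_ge_atTop (p + 1))).exists
  have hjump : 1 / 8 ≤ dist (anchor d (q + 1)) (anchor d q) := by
    rw [Real.dist_eq, anchor, if_pos hq]
    exact le_abs_swing_sub (div_record_mem_Icc hd hd2 hq).1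
  linarith [dist_triangle_right (anchor d (q + 1)) (anchor d q) l, hanchor q hqp,
    hanchor (q + 1) (hqp.trans q.le_succ)]

end Oscillation

section Divergence

theorem mem_divSet_iff_not_cauchySeq {f : List Bool → ℝ} (hf : ∀ s, f s ∈ Set.Icc 0 1)
    (β : ℕ → Bool) : β ∈ divSet f ↔ ¬ CauchySeq fun n => f (seg β n) := by
  let Tail (N : ℕ) := {n : ℕ // N ≤ n}
  let diff (N : ℕ) (p q : Tail N) : ℝ := |f (seg β p.1) - f (seg β q.1)|
  have hdiff : ∀ N p q, diff N p q ≤ 1 := fun N p q =>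
    Real.dist_le_of_mem_Icc_01 (hf (seg β p.1)) (hf (seg β q.1))
  have : ∀ N, Nonempty (Tail N) := fun N => ⟨⟨N, le_rfl⟩⟩
  have hle : ∀ N p q, diff N p q ≤ ⨆ p, ⨆ q, diff N p q := fun N p q =>
    (le_ciSup (f := diff N p) ⟨1, Set.forall_mem_range.2 (hdiff N p)⟩ q).trans
      (le_ciSup (f := fun p => ⨆ q, diff N p q)
        ⟨1, Set.forall_mem_range.2 fun p => ciSup_le (hdiff N p)⟩ p)
  have hbdd : BddBelow (Set.range fun N => ⨆ p, ⨆ q, diff N p q) :=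
    ⟨0, Set.forall_mem_range.2 fun N => Real.iSup_nonneg fun p => Real.iSup_nonneg fun q =>
      abs_nonneg _⟩
  change 0 < osc f β ↔ _
  rw [← not_le, not_iff_not, Metric.cauchySeq_iff]
  refine ⟨fun hosc ε hε => ?_, fun hcauchy => le_of_forall_pos_le_add fun ε hε => ?_⟩
  · obtain ⟨N, hN⟩ := exists_lt_of_ciInf_lt (hosc.trans_lt hε)
    exact ⟨N, fun p hp q hq => (hle N ⟨p, hp⟩ ⟨q, hq⟩).trans_lt hN⟩
  · obtain ⟨N, hN⟩ := hcauchy ε hε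
    rw [zero_add]
    exact (ciInf_le hbdd N).trans
      (ciSup_le fun p => ciSup_le fun q => (hN p.1 p.2 q.1 q.2).le)

variable {M : List Bool → ℝ}

theorem IsFair.isMartingale_pathwise_oscillate (hM : IsFair M) (hpos : ∀ s, 0 < M s) :
    IsMartingale (pathwise oscillate M) := by
  refine ⟨fun s => ?_, hM.pathwise_of_isTransform isTransform_oscillate⟩
  obtain ⟨β, hβ⟩ := exists_seg_eq s
  rw [← hβ, isTransform_oscillate.isCausal.pathwise_seg]
  exact oscillate_mem_Icc (fun n => hpos _) (fun n =>
    seg_succ β n ▸ hM.append_singleton_le (fun s => (hpos s).le) _ _) _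

theorem IsFair.mem_divSet_pathwise_oscillate_iff (hM : IsFair M) (hpos : ∀ s, 0 < M s)
    {β : ℕ → Bool} (hβ : Tendsto (fun n => M (seg β n)) atTop atTop ∨
      ∃ l, Tendsto (fun n => M (seg β n)) atTop (𝓝 l)) :
    β ∈ divSet (pathwise oscillate M) ↔ Tendsto (fun n => M (seg β n)) atTop atTop := by
  rw [mem_divSet_iff_not_cauchySeq (hM.isMartingale_pathwise_oscillate hpos).1]
  simp only [isTransform_oscillate.isCausal.pathwise_seg]
  constructor
  · refine fun hosc => hβ.resolve_right fun ⟨l, hl⟩ => hosc ?_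
    obtain ⟨l', hl'⟩ := exists_tendsto_oscillate (fun n => hpos _) hl
    exact hl'.cauchySeq
  · intro htop hosc
    obtain ⟨l, hl⟩ := cauchySeq_tendsto_of_complete hosc
    exact not_tendsto_oscillate (fun n => hpos _) (fun n =>
      seg_succ β n ▸ hM.append_singleton_le (fun s => (hpos s).le) _ _) htop l hl

theorem measurable_pathwise_oscillate {X : Type*} [MeasurableSpace X] {M : X → List Bool → ℝ}
    (hM : ∀ s, Measurable fun x => M x s) (s : List Bool) :
    Measurable fun x => pathwise oscillate (M x) s :=
  (measurable_oscillate s.length).comp (measurable_pi_lambda _ fun k => hM (s.take k))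

theorem borel_parametrized_divergence_general {X : Type*} [MeasurableSpace X]
    [StandardBorelSpace X] (μ : Measure (ℕ → Bool))
    (hμ : ∀ s : List Bool, μ (cyl s) = (1 / 2 : ℝ≥0∞) ^ s.length)
    (𝒢 : Set (ℕ → Bool)) (h𝒢0 : μ 𝒢 = 0) (G : Set (X × (ℕ → Bool))) (hGmeas : MeasurableSet G)
    (hGsub : ∀ p ∈ G, p.2 ∈ 𝒢) (hGsec : ∀ x, IsGδ {β | (x, β) ∈ G}) :
    ∃ F : X → Mart, Measurable F ∧ ∀ x, {β | (x, β) ∈ G} = divSet (F x).1 := by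
  obtain ⟨A, hA, hGA⟩ := exists_measurable_frequently_seg_mem_iff hGmeas hGsec
  obtain ⟨m, hfair, hm0, hmr, hlim, hwin⟩ := exists_forall_isFair_tendsto_of_measure_eq_zero hμ h𝒢0
  have hbet : ∀ x, IsFair (bet m (A x)) := fun x => isFair_bet hfair (A x)
  have hpos : ∀ x s, 0 < bet m (A x) s := fun x s =>
    one_half_pos.trans_le (half_le_bet hm0 hmr (A x) s)
  refine ⟨fun x => ⟨pathwise oscillate (bet m (A x)),
    (hbet x).isMartingale_pathwise_oscillate (hpos x)⟩, ?_, fun x => Set.ext fun β => ?_⟩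
  · exact (measurable_pi_lambda _ (measurable_pathwise_oscillate (measurable_bet hA m))).subtype_mk
  · have hmem : (x, β) ∈ G → Tendsto (fun n => bet m (A x) (seg β n)) atTop atTop := fun h =>
      tendsto_bet_atTop hm0 hmr (fun r => hwin r β (hGsub _ h)) ((hGA x β).1 h)
    have hnmem : (x, β) ∉ G → ∃ l, Tendsto (fun n => bet m (A x) (seg β n)) atTop (𝓝 l) :=
      fun h => exists_tendsto_bet (fun r => hlim r β) (mt (hGA x β).2 h)
    rw [(hbet x).mem_divSet_pathwise_oscillate_iff (hpos x) ((em _).imp hmem hnmem)]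
    refine ⟨hmem, fun htop => by_contra fun h => ?_⟩
    obtain ⟨l, hl⟩ := hnmem h
    exact not_tendsto_nhds_of_tendsto_atTop htop l hl

end Divergence

/-- for a nonempty Gδ set `𝒢 ⊆ 2^ω` of λ-measure zero and a
Borel `G ⊆ ω^ω × 2^ω` contained in `ω^ω × 𝒢` with Gδ vertical sections, there
is a Borel map `F : ω^ω → 𝓜` with `G_α = D(F(α))` for every `α`. -/
theorem borel_parametrized_divergence
    (μ : Measure (ℕ → Bool))
    (hμ : ∀ s : List Bool, μ (cyl s) = (1/2 : ℝ≥0∞) ^ s.length)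
    (𝒢 : Set (ℕ → Bool)) (h𝒢ne : 𝒢.Nonempty) (h𝒢 : IsGδ 𝒢) (h𝒢0 : μ 𝒢 = 0)
    (G : Set ((ℕ → ℕ) × (ℕ → Bool))) (hGmeas : MeasurableSet G)
    (hGsub : ∀ p ∈ G, p.2 ∈ 𝒢)
    (hGsec : ∀ α : ℕ → ℕ, IsGδ {β | (α, β) ∈ G}) :
    ∃ F : (ℕ → ℕ) → Mart, Measurable F ∧
      ∀ α : ℕ → ℕ, {β | (α, β) ∈ G} = divSet (F α).1 :=
  borel_parametrized_divergence_general μ hμ 𝒢 h𝒢0 G hGmeas hGsub hGsec
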